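/- arXiv:1304.1221 — 2 statements merged into one kernel-verified Lean document; each statement's English description precedes it below -/
import Mathlib

section
/- Let G be a starlike tree on n vertices whose central vertex u is adjacent to one end of each of h ≥ 3 paths P_{a_1}, …, P_{a_h}, where a_i is even for 1 ≤ i ≤ h-1, a_1 = a_2 = k ≥ 2, and a_h < n/2 is odd. Let G' be obtained from G by adding an edge between the first vertices (the ends farthest from u) of the two branches of length k, so that G' is unicyclic containing the cycle C_{2k+1}. Then LE(G) = LE(G'), where LE denotes the Laplacian energy. -/
open scoped Classical

/-- Base relation for a starlike tree: the central vertex `Sum.inl ()` is adjacent to the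
end (index `0`) of each of the `r` branches, and branch `i` is a path on `a i` vertices. -/
def starRel (r : ℕ) (a : Fin r → ℕ) :
    (Unit ⊕ (Σ i : Fin r, Fin (a i))) → (Unit ⊕ (Σ i : Fin r, Fin (a i))) → Prop
  | Sum.inl _, Sum.inr ⟨_, j⟩ => (j : ℕ) = 0
  | Sum.inr ⟨i, j⟩, Sum.inr ⟨i', j'⟩ => (i : ℕ) = (i' : ℕ) ∧ (j : ℕ) + 1 = (j' : ℕ)
  | _, _ => False

/-- The starlike tree whose central vertex is adjacent to one end of each of the `r`
paths `P_{a 0}, …, P_{a (r-1)}`. -/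
def starGraph (r : ℕ) (a : Fin r → ℕ) : SimpleGraph (Unit ⊕ (Σ i : Fin r, Fin (a i))) :=
  SimpleGraph.fromRel (starRel r a)

/-- The Laplacian energy of a graph: `LE(G) = Σ_i |μ_i - d̄|`, `d̄ = 2e(G)/|V|`. -/
noncomputable def LEnergy {V : Type*} [Fintype V] [DecidableEq V] (G : SimpleGraph V) : ℝ :=
  (((G.lapMatrix ℝ).charpoly.roots).map
    (fun μ => |μ - 2 * (G.edgeFinset.card : ℝ) / (Fintype.card V : ℝ)|)).sum

/-!
Let `L` and `L'` be the Laplacians of `G` and `G'`, two graphs of average degrees `2 - 2 / n` and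
`2`.

*Both averages are medians of the spectrum of `L`.* Inside a branch, `L - 2` maps `x` to
`-(x (t - 1) + x (t + 1))` at position `t`. Requiring that these sums vanish at alternate positions
imposes `n / 2 - 1` conditions, under which the quadratic form of `L - 2` collapses to a single
negative square: so `L` has at most `n / 2 - 1` eigenvalues above `2` and at most `n / 2` below.
Moreover, with `y t = (-1) ^ t * x (2 * t)` on each branch, walked to its end and back, the
Dirichlet form of `y` is at most `‖(L - 2) x‖ ^ 2`, and a Poincaré inequality for `y` shows that at
most one eigenvalue lies within `2 / n` of `2`. Hence at most `n / 2` eigenvalues exceed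
`2 - 2 / n`, and `∑ |μ - c|` takes the same value at `c = 2 - 2 / n` and `c = 2`.

*`L` and `L'` have the same distances to `2`.* As `L - 2` only links branch positions of opposite
parities, exchanging the two equal branches at even positions in the rows and at odd positions in
the columns of `L - 2` changes it only at the ends of these branches, and the result is `L' - 2`.
Thus the singular values of `L - 2` and `L' - 2` agree.
-/

open Finset Matrix

/-! ### Eigenvalues of symmetric matrices -/

section Spectral

lemma card_filter_pos_le_finrank {ι E F : Type*} [Fintype ι] [AddCommGroup E] [Module ℝ E]
    [AddCommGroup F] [Module ℝ F] [Module.Finite ℝ F] (b : Module.Basis ι ℝ E) (w : ι → ℝ)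
    (φ : E →ₗ[ℝ] F) (hφ : ∀ x, φ x = 0 → ∑ i, w i * b.repr x i ^ 2 ≤ 0) :
    #{i | 0 < w i} ≤ Module.finrank ℝ F := by
  set s : Set ι := {i | 0 < w i}
  have hinj : Function.Injective (φ.domRestrict (Submodule.span ℝ (b '' s))) := by
    refine (injective_iff_map_eq_zero _).2 fun ⟨x, hx⟩ hφx => ?_
    have hsupp : ∀ i, ¬ 0 < w i → b.repr x i = 0 := fun i hi =>
      Finsupp.notMem_support_iff.1 fun h => hi (b.mem_span_image.1 hx h)
    have hnonneg : ∀ i ∈ univ, 0 ≤ w i * b.repr x i ^ 2 := fun i _ => by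
      by_cases hi : 0 < w i
      · positivity
      · simp [hsupp i hi]
    have hzero := (sum_eq_zero_iff_of_nonneg hnonneg).1 ((hφ x hφx).antisymm (sum_nonneg hnonneg))
    have hrepr : b.repr x = 0 := by
      ext i
      by_cases hi : 0 < w i
      · simpa [hi.ne'] using hzero i (mem_univ i)
      · exact hsupp i hi
    simpa using hrepr
  have hrank : Module.finrank ℝ (Submodule.span ℝ (b '' s)) = #{i | 0 < w i} := by
    rw [Set.image_eq_range]
    exact (finrank_span_eq_card (b.linearIndependent.comp ((↑) : s → ι)
      Subtype.val_injective)).trans (Fintype.card_subtype _)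
  have := Module.Finite.of_basis b
  exact hrank ▸ LinearMap.finrank_le_finrank_of_injective hinj

variable {V : Type*} [Fintype V] [DecidableEq V] {A B : Matrix V V ℝ}

lemma exists_basis_dotProduct_cfc_mulVec (hA : A.IsHermitian) :
    ∃ b : Module.Basis V ℝ (V → ℝ), ∀ (f : ℝ → ℝ) (x : V → ℝ),
      x ⬝ᵥ cfc f A *ᵥ x = ∑ i, f (hA.eigenvalues i) * b.repr x i ^ 2 := by
  refine ⟨hA.eigenvectorBasis.toBasis.map (WithLp.linearEquiv 2 ℝ (V → ℝ)), fun f x => ?_⟩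
  have hrepr : (hA.eigenvectorUnitary : Matrix V V ℝ)ᵀ *ᵥ x =
      fun i => hA.eigenvectorBasis.repr (WithLp.toLp 2 x) i := by
    ext i
    rw [OrthonormalBasis.repr_apply_apply]
    simp [mulVec, EuclideanSpace.inner_eq_star_dotProduct, dotProduct, mul_comm]
  rw [hA.cfc_eq, IsHermitian.cfc, Unitary.conjStarAlgAut_apply, star_eq_conjTranspose,
    conjTranspose_eq_transpose_of_trivial, ← mulVec_mulVec, ← mulVec_mulVec, dotProduct_mulVec,
    ← mulVec_transpose, hrepr]
  simp only [dotProduct, mulVec_diagonal]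
  refine sum_congr rfl fun i _ => ?_
  simp
  ring

lemma card_cfc_eigenvalues_pos_le_finrank {F : Type*} [AddCommGroup F] [Module ℝ F]
    [Module.Finite ℝ F] (hA : A.IsHermitian) (f : ℝ → ℝ) (φ : (V → ℝ) →ₗ[ℝ] F)
    (hφ : ∀ x, φ x = 0 → x ⬝ᵥ cfc f A *ᵥ x ≤ 0) :
    #{i | 0 < f (hA.eigenvalues i)} ≤ Module.finrank ℝ F := by
  obtain ⟨b, hb⟩ := exists_basis_dotProduct_cfc_mulVec hA
  exact card_filter_pos_le_finrank b (fun i => f (hA.eigenvalues i)) φ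
    fun x hx => (hb f x).symm.trans_le (hφ x hx)

lemma cfc_sub_const_eq (hA : A.IsHermitian) (c : ℝ) : cfc (fun t => t - c) A = A - c • 1 := by
  have : IsSelfAdjoint A := hA
  rw [cfc_sub (fun t => t) (fun _ => c) A, cfc_id' ℝ A, cfc_const c A]
  simp [Algebra.algebraMap_eq_smul_one]

lemma cfc_sub_const_sq_eq (hA : A.IsHermitian) (c : ℝ) :
    cfc (fun t => (t - c) ^ 2) A = (A - c • 1)ᵀ * (A - c • 1) := by
  rw [cfc_pow (fun t => t - c) 2 A, cfc_sub_const_eq hA, sq]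
  simp [← conjTranspose_eq_transpose_of_trivial, hA.eq]

lemma card_lt_eigenvalues_le_finrank {F : Type*} [AddCommGroup F] [Module ℝ F]
    [Module.Finite ℝ F] (hA : A.IsHermitian) (c : ℝ) (φ : (V → ℝ) →ₗ[ℝ] F)
    (hφ : ∀ x, φ x = 0 → x ⬝ᵥ A *ᵥ x ≤ c * (x ⬝ᵥ x)) :
    #{i | c < hA.eigenvalues i} ≤ Module.finrank ℝ F := by
  simp only [← sub_pos (b := c)]
  refine card_cfc_eigenvalues_pos_le_finrank hA (fun t => t - c) φ fun x hx => ?_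
  rw [cfc_sub_const_eq hA, sub_mulVec, smul_mulVec, one_mulVec, dotProduct_sub, dotProduct_smul]
  exact sub_nonpos.2 (hφ x hx)

lemma card_eigenvalues_lt_le_finrank {F : Type*} [AddCommGroup F] [Module ℝ F]
    [Module.Finite ℝ F] (hA : A.IsHermitian) (c : ℝ) (φ : (V → ℝ) →ₗ[ℝ] F)
    (hφ : ∀ x, φ x = 0 → c * (x ⬝ᵥ x) ≤ x ⬝ᵥ A *ᵥ x) :
    #{i | hA.eigenvalues i < c} ≤ Module.finrank ℝ F := by
  simp only [← sub_pos (a := c), ← neg_sub _ c]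
  refine card_cfc_eigenvalues_pos_le_finrank hA (fun t => -(t - c)) φ fun x hx => ?_
  rw [cfc_neg, cfc_sub_const_eq hA, neg_mulVec, sub_mulVec, smul_mulVec, one_mulVec,
    dotProduct_neg, dotProduct_sub, dotProduct_smul]
  exact neg_nonpos.2 (sub_nonneg.2 (hφ x hx))

lemma card_abs_eigenvalues_sub_lt_le_finrank {F : Type*} [AddCommGroup F] [Module ℝ F]
    [Module.Finite ℝ F] (hA : A.IsHermitian) (c δ : ℝ) (φ : (V → ℝ) →ₗ[ℝ] F)
    (hφ : ∀ x, φ x = 0 → δ ^ 2 * (x ⬝ᵥ x) ≤ ((A - c • 1) *ᵥ x) ⬝ᵥ ((A - c • 1) *ᵥ x)) :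
    #{i | |hA.eigenvalues i - c| < δ} ≤ Module.finrank ℝ F := by
  have hcfc : cfc (fun t => δ ^ 2 - (t - c) ^ 2) A =
      δ ^ 2 • 1 - (A - c • 1)ᵀ * (A - c • 1) := by
    have : IsSelfAdjoint A := hA
    rw [cfc_sub (fun _ => δ ^ 2) (fun t => (t - c) ^ 2) A, cfc_const _ A, cfc_sub_const_sq_eq hA,
      Algebra.algebraMap_eq_smul_one]
  refine (card_le_card fun i hi => ?_).trans
    (card_cfc_eigenvalues_pos_le_finrank hA (fun t => δ ^ 2 - (t - c) ^ 2) φ fun x hx => ?_)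
  · have hi' := (mem_filter.1 hi).2
    exact mem_filter.2 ⟨mem_univ i, sub_pos.2 (sq_lt_sq.2 (hi'.trans_le (le_abs_self δ)))⟩
  · rw [hcfc, sub_mulVec, smul_mulVec, one_mulVec, dotProduct_sub, dotProduct_smul, ← mulVec_mulVec,
      dotProduct_mulVec, ← mulVec_transpose, transpose_transpose]
    exact sub_nonpos.2 (hφ x hx)

-- Permuting the rows of `A - c • 1` does not change its Gram matrix, and permuting the columns
-- conjugates it, so `A - c • 1` and `B - c • 1` have the same singular values `|μ - c|`.
lemma sum_abs_eigenvalues_sub_eq_of_submatrix (hA : A.IsHermitian) (hB : B.IsHermitian) (c : ℝ)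
    (e f : V ≃ V) (h : B - c • 1 = (A - c • 1).submatrix e f) :
    ∑ i, |hB.eigenvalues i - c| = ∑ i, |hA.eigenvalues i - c| := by
  have hroots : ∀ {M : Matrix V V ℝ} (hM : M.IsHermitian),
      ((M - c • 1)ᵀ * (M - c • 1)).charpoly.roots =
        univ.val.map fun i => (hM.eigenvalues i - c) ^ 2 := fun hM => by
    rw [← cfc_sub_const_sq_eq hM, hM.charpoly_cfc_eq]
    exact (Polynomial.roots_prod _ _ (Polynomial.monic_prod_X_sub_C _ _).ne_zero).trans (by
      simp [-map_pow, -map_sub])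
  have hsq : (B - c • 1)ᵀ * (B - c • 1) =
      reindex f.symm f.symm ((A - c • 1)ᵀ * (A - c • 1)) := by
    rw [h, transpose_submatrix, submatrix_mul_equiv]
    rfl
  have hmap := hroots hB
  rw [hsq, charpoly_reindex, hroots hA] at hmap
  simpa [Multiset.map_map, Function.comp_def, Real.sqrt_sq_eq_abs] using
    congrArg (fun m : Multiset ℝ => (m.map Real.sqrt).sum) hmap.symm

end Spectral

lemma sum_abs_sub_eq_of_card_le {ι : Type*} [Fintype ι] (μ : ι → ℝ) {s t : ℝ} (hst : s < t)
    {m : ℕ} (hι : Fintype.card ι = 2 * m) (hs : #{i | s < μ i} ≤ m) (ht : #{i | μ i < t} ≤ m) :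
    ∑ i, |μ i - s| = ∑ i, |μ i - t| := by
  set S : Finset ι := {i | s < μ i}
  set T : Finset ι := {i | μ i < t}
  have hunion : S ∪ T = univ := by
    ext i
    simpa [S, T, or_iff_not_imp_left] using fun h => lt_of_le_of_lt h hst
  have hcard := card_union_add_card_inter S T
  rw [hunion, card_univ, hι] at hcard
  have hdisj : S ∩ T = ∅ := card_eq_zero.1 (by omega)
  have hterm : ∀ i, |μ i - s| - |μ i - t| =
      (t - s) * ((if s < μ i then 1 else 0) - if μ i < t then 1 else 0) := fun i => by
    have hi : i ∉ S ∩ T := by simp [hdisj]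
    simp only [S, T, mem_inter, mem_filter, mem_univ, true_and, not_and, not_lt] at hi
    by_cases h : s < μ i
    · rw [abs_of_pos (by linarith), abs_of_nonneg (by linarith [hi h]), if_pos h,
        if_neg (hi h).not_gt]
      ring
    · rw [abs_of_nonpos (by linarith), abs_of_neg (by linarith), if_neg h, if_pos (by linarith)]
      ring
  rw [← sub_eq_zero, ← sum_sub_distrib, sum_congr rfl fun i _ => hterm i, ← mul_sum,
    sum_sub_distrib, sum_boole, sum_boole, show #S = #T by omega, sub_self,
    mul_zero]

lemma LEnergy_eq_sum_abs_eigenvalues_sub {V : Type*} [Fintype V] [DecidableEq V]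
    {G : SimpleGraph V} [DecidableRel G.Adj] [Fintype G.edgeSet]
    (hL : (G.lapMatrix ℝ).IsHermitian) {d : ℝ} (hd : (2 * #G.edgeFinset / Fintype.card V : ℝ) = d) :
    LEnergy G = ∑ v, |hL.eigenvalues v - d| := by
  have hroots : ∑ v, |hL.eigenvalues v - d| =
      ((G.lapMatrix ℝ).charpoly.roots.map fun μ => |μ - d|).sum := by
    rw [hL.roots_charpoly_eq_eigenvalues, Multiset.map_map]
    rfl
  rw [hroots, LEnergy, ← hd]
  congr!

/-! ### Dirichlet forms -/

section Laplacian

variable {V : Type*}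

/-- The squared increment `(x u - x v) ^ 2` of a function `x` along an edge `s(u, v)`, the summand
of the Dirichlet form of `x`. -/
def edgeDiffSq (x : V → ℝ) : Sym2 V → ℝ :=
  Sym2.lift ⟨fun u v => (x u - x v) ^ 2, fun _ _ => by ring⟩

@[simp]
lemma edgeDiffSq_mk (x : V → ℝ) (u v : V) : edgeDiffSq x s(u, v) = (x u - x v) ^ 2 := rfl

lemma edgeDiffSq_nonneg (x : V → ℝ) (e : Sym2 V) : 0 ≤ edgeDiffSq x e := by
  induction e with
  | h u v => exact sq_nonneg _

variable {G : SimpleGraph V}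

lemma sq_sub_le_length_mul_sum_edgeDiffSq (x : V → ℝ) {u v : V} (p : G.Walk u v) :
    (x u - x v) ^ 2 ≤ p.length * (p.edges.map (edgeDiffSq x)).sum := by
  induction p with
  | nil => simp
  | @cons u v w h p ih =>
    simp only [SimpleGraph.Walk.length_cons, SimpleGraph.Walk.edges_cons, List.map_cons,
      List.sum_cons, edgeDiffSq_mk, Nat.cast_succ]
    set S := (p.edges.map (edgeDiffSq x)).sum
    set l : ℝ := (p.length : ℝ)
    have hS : 0 ≤ S := List.sum_nonneg (by simp [edgeDiffSq_nonneg])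
    have hcross : 2 * (x u - x v) * (x v - x w) ≤ l * (x u - x v) ^ 2 + S := by
      refine abs_le_of_sq_le_sq' ?_ (by positivity) |>.2
      nlinarith [sq_nonneg (l * (x u - x v) ^ 2 - S), sq_nonneg (x u - x v)]
    linarith [sq (x u - x v + (x v - x w))]

variable [Fintype V] [DecidableRel G.Adj]

lemma sum_sum_ite_adj_eq_two_mul_sum_edgeFinset (f : Sym2 V → ℝ) :
    ∑ u, ∑ v, (if G.Adj u v then f s(u, v) else 0) = 2 * ∑ e ∈ G.edgeFinset, f e := by
  have hdarts : ∑ d : G.Dart, f d.edge =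
      ∑ p : V × V, if G.Adj p.1 p.2 then f s(p.1, p.2) else 0 := by
    rw [← sum_filter]
    exact sum_bij (fun d _ => d.toProd) (fun d _ => by simp [d.adj])
      (fun d _ d' _ hdd => SimpleGraph.Dart.ext _ _ hdd)
      (fun p hp => ⟨⟨p, (mem_filter.1 hp).2⟩, mem_univ _, rfl⟩) fun d _ => rfl
  rw [← Fintype.sum_prod_type', ← hdarts,
    ← sum_fiberwise_of_maps_to (t := G.edgeFinset) (g := SimpleGraph.Dart.edge)
      fun d _ => SimpleGraph.mem_edgeFinset.2 d.edge_mem, mul_sum]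
  refine sum_congr rfl fun e he => ?_
  rw [sum_congr rfl fun d hd => congrArg f (mem_filter.1 hd).2, sum_const,
    G.dart_edge_fiber_card e (SimpleGraph.mem_edgeFinset.1 he), nsmul_eq_mul, Nat.cast_ofNat]

variable [DecidableEq V]

lemma dotProduct_lapMatrix_mulVec (x : V → ℝ) :
    x ⬝ᵥ G.lapMatrix ℝ *ᵥ x = ∑ e ∈ G.edgeFinset, edgeDiffSq x e := by
  have h := G.lapMatrix_toLinearMap₂' ℝ x
  have h' := sum_sum_ite_adj_eq_two_mul_sum_edgeFinset (G := G) (edgeDiffSq x)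
  simp only [edgeDiffSq_mk] at h'
  rw [toLinearMap₂'_apply', h'] at h
  linarith

lemma sq_sub_le_card_mul_dotProduct_lapMatrix (hG : G.Preconnected) (x : V → ℝ) (u v : V) :
    (x u - x v) ^ 2 ≤ Fintype.card V * (x ⬝ᵥ G.lapMatrix ℝ *ᵥ x) := by
  obtain ⟨p, hp⟩ := (hG u v).exists_isPath
  rw [dotProduct_lapMatrix_mulVec]
  refine (sq_sub_le_length_mul_sum_edgeDiffSq x p).trans ?_
  have hedges : (p.edges.map (edgeDiffSq x)).sum ≤ ∑ e ∈ G.edgeFinset, edgeDiffSq x e := by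
    rw [← List.sum_toFinset _ hp.edges_nodup]
    refine sum_le_sum_of_subset_of_nonneg (fun e he => ?_) fun e _ _ => edgeDiffSq_nonneg x e
    exact SimpleGraph.mem_edgeFinset.2 (p.edges_subset_edgeSet (List.mem_toFinset.1 he))
  have hlength : (p.length : ℝ) ≤ Fintype.card V := by exact_mod_cast hp.length_lt.le
  exact mul_le_mul hlength hedges (List.sum_nonneg (by simp [edgeDiffSq_nonneg]))
    (Nat.cast_nonneg _)

-- Since `x` has mean zero, moving the origin to the midrange of `x` only increases `∑ x v ^ 2`.
lemma four_mul_dotProduct_self_le_of_sum_eq_zero (hG : G.Preconnected) {x : V → ℝ}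
    (hx : ∑ v, x v = 0) :
    4 * (x ⬝ᵥ x) ≤ Fintype.card V ^ 2 * (x ⬝ᵥ G.lapMatrix ℝ *ᵥ x) := by
  rcases isEmpty_or_nonempty V with hV | hV
  · simp
  obtain ⟨u, hu⟩ := Finite.exists_max x
  obtain ⟨v, hv⟩ := Finite.exists_min x
  have hmid : ∀ w, 4 * (x w - (x u + x v) / 2) ^ 2 ≤ (x u - x v) ^ 2 := fun w => by
    nlinarith [mul_nonneg (sub_nonneg.2 (hu w)) (sub_nonneg.2 (hv w))]
  have hexpand : ∑ w, (x w - (x u + x v) / 2) ^ 2 =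
      x ⬝ᵥ x + Fintype.card V * ((x u + x v) / 2) ^ 2 := by
    simp only [sub_sq, sum_add_distrib, sum_sub_distrib, ← sum_mul, ← mul_sum, hx, dotProduct]
    simp [sq]
  calc 4 * (x ⬝ᵥ x) ≤ ∑ w, 4 * (x w - (x u + x v) / 2) ^ 2 := by
        rw [← mul_sum, hexpand]
        nlinarith [sq_nonneg ((x u + x v) / 2), (Nat.cast_nonneg (Fintype.card V) : (0 : ℝ) ≤ _)]
    _ ≤ ∑ _w : V, (x u - x v) ^ 2 := sum_le_sum fun w _ => hmid w
    _ = Fintype.card V * (x u - x v) ^ 2 := by simp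
    _ ≤ Fintype.card V * (Fintype.card V * (x ⬝ᵥ G.lapMatrix ℝ *ᵥ x)) := by
        gcongr
        exact sq_sub_le_card_mul_dotProduct_lapMatrix hG x u v
    _ = Fintype.card V ^ 2 * (x ⬝ᵥ G.lapMatrix ℝ *ᵥ x) := by ring

lemma lapMatrix_mulVec_apply_eq_sum (x : V → ℝ) (v : V) :
    (G.lapMatrix ℝ *ᵥ x) v = ∑ u, if G.Adj v u then x v - x u else 0 := by
  rw [G.lapMatrix_mulVec_apply, ← sum_filter, ← G.neighborFinset_eq_filter, sum_sub_distrib,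
    sum_const, G.card_neighborFinset_eq_degree, nsmul_eq_mul]

lemma lapMatrix_sup_edge_mulVec {s t : V} (hst : s ≠ t) (hadj : ¬ G.Adj s t)
    [DecidableRel (G ⊔ SimpleGraph.edge s t).Adj] (x : V → ℝ) :
    (G ⊔ SimpleGraph.edge s t).lapMatrix ℝ *ᵥ x =
      G.lapMatrix ℝ *ᵥ x + (x s - x t) • (Pi.single s 1 - Pi.single t 1) := by
  have hsplit : ∀ v u, (if (G ⊔ SimpleGraph.edge s t).Adj v u then x v - x u else 0) =
      (if G.Adj v u then x v - x u else 0) +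
        ((if u = t then if v = s then x v - x u else 0 else 0) +
          if u = s then if v = t then x v - x u else 0 else 0) := fun v u => by
    simp only [SimpleGraph.sup_adj, SimpleGraph.edge_adj]
    have hadj' : ¬ G.Adj t s := fun h => hadj h.symm
    grind
  ext v
  simp only [lapMatrix_mulVec_apply_eq_sum, hsplit, sum_add_distrib, sum_ite_eq', mem_univ, if_true,
    Pi.add_apply, Pi.smul_apply, Pi.sub_apply, Pi.single_apply, smul_eq_mul]
  grind

end Laplacian

/-! ### Starlike trees -/

section Starlike

variable {h : ℕ} {a : Fin h → ℕ}

/-- The vertices of the starlike tree with branches of lengths `a i`: the centre `Sum.inl ()` and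
the vertices `Sum.inr ⟨i, j⟩`, `j = 0, 1, …`, of branch `i`, listed from the centre outwards. -/
abbrev StarVertex (a : Fin h → ℕ) : Type := Unit ⊕ (Σ i : Fin h, Fin (a i))

/-- The `t`-th vertex on branch `i` of the starlike tree, where position `0` is the centre and the
branch is walked to its end and back: positions `t` and `2 * a i + 1 - t` hold the same vertex.
Repeating the end vertex at `a i + 1` turns the recurrence of the Laplacian at the end of a branch
into the one at its interior vertices. -/
def starVertex (i : Fin h) (t : ℕ) : StarVertex a :=
  if ht : min t (2 * a i + 1 - t) = 0 then Sum.inl ()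
  else Sum.inr ⟨i, min t (2 * a i + 1 - t) - 1, by omega⟩

lemma starVertex_eq_inl_iff {i : Fin h} {t : ℕ} {c : Unit} :
    (starVertex i t : StarVertex a) = Sum.inl c ↔ min t (2 * a i + 1 - t) = 0 := by
  unfold starVertex
  split_ifs <;> simp_all

lemma starVertex_eq_inr_iff {i : Fin h} {t : ℕ} {p : Σ i : Fin h, Fin (a i)} :
    starVertex i t = Sum.inr p ↔ i = p.1 ∧ min t (2 * a i + 1 - t) = p.2 + 1 := by
  obtain ⟨i', j⟩ := p
  unfold starVertex
  split_ifs with ht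
  · simp only [false_iff, not_and]
    rintro rfl
    omega
  · rw [Sum.inr.injEq, Sigma.mk.injEq]
    refine and_congr_right ?_
    rintro rfl
    rw [heq_eq_eq, Fin.ext_iff]
    dsimp only
    omega

lemma starVertex_inj {i : Fin h} {s t : ℕ} :
    (starVertex i s : StarVertex a) = starVertex i t ↔
      min s (2 * a i + 1 - s) = min t (2 * a i + 1 - t) := by
  refine ⟨fun hst => ?_, fun hst => by simp only [starVertex, hst]⟩
  rcases ht : (starVertex i t : StarVertex a) with c | p
  · rw [starVertex_eq_inl_iff.1 (hst.trans ht), starVertex_eq_inl_iff.1 ht]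
  · rw [(starVertex_eq_inr_iff.1 (hst.trans ht)).2, (starVertex_eq_inr_iff.1 ht).2]

@[simp]
lemma starVertex_zero (i : Fin h) : (starVertex i 0 : StarVertex a) = Sum.inl () := by
  simp [starVertex]

lemma starVertex_succ (p : Σ i : Fin h, Fin (a i)) : starVertex p.1 (p.2 + 1) = Sum.inr p :=
  starVertex_eq_inr_iff.2 ⟨rfl, by omega⟩

lemma sum_starVertex (f : StarVertex a → ℝ) :
    ∑ v, f v = f (Sum.inl ()) + ∑ i, ∑ t ∈ range (a i), f (starVertex i (t + 1)) := by
  simp only [Fintype.sum_sum_type, Fintype.sum_sigma, univ_unique, sum_singleton, ← starVertex_succ,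
    Finset.sum_range]

lemma starRel_iff {v w : StarVertex a} :
    starRel h a v w ↔ ∃ p, starVertex p.1 p.2 = v ∧ Sum.inr p = w := by
  rcases v with c | ⟨i, j⟩ <;> rcases w with c' | ⟨i', j'⟩
  · simp [starRel]
  · simp only [starRel, Sum.inr.injEq, exists_eq_right, starVertex_eq_inl_iff]
    omega
  · simp [starRel]
  · simp only [starRel, Sum.inr.injEq, exists_eq_right, starVertex_eq_inr_iff, ← Fin.ext_iff]
    omega

lemma starGraph_adj_iff {v w : StarVertex a} :
    (starGraph h a).Adj v w ↔ ∃ p, s(starVertex p.1 p.2, Sum.inr p) = s(v, w) := by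
  have hne : ∀ p : Σ i, Fin (a i), (starVertex p.1 p.2 : StarVertex a) ≠ Sum.inr p := fun p hp => by
    have := (starVertex_eq_inr_iff.1 hp).2
    omega
  simp only [starGraph, SimpleGraph.fromRel_adj, starRel_iff, Sym2.eq_iff, ← exists_or]
  constructor
  · rintro ⟨-, p, hp⟩
    exact ⟨p, by tauto⟩
  · rintro ⟨p, ⟨rfl, rfl⟩ | ⟨rfl, rfl⟩⟩
    exacts [⟨hne p, p, .inl ⟨rfl, rfl⟩⟩, ⟨(hne p).symm, p, .inr ⟨rfl, rfl⟩⟩]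

/-- The edge of the starlike tree joining the vertex `p` of a branch to its neighbour on the side of
the centre. -/
def starEdge (p : Σ i : Fin h, Fin (a i)) : Sym2 (StarVertex a) := s(starVertex p.1 p.2, Sum.inr p)

lemma starEdge_injective : Function.Injective (starEdge (a := a)) := fun p q hpq => by
  rcases Sym2.eq_iff.1 hpq with ⟨-, h₂⟩ | ⟨h₁, h₂⟩
  · exact Sum.inr_injective h₂
  · have := starVertex_eq_inr_iff.1 h₁
    have := starVertex_eq_inr_iff.1 h₂.symm
    omega

lemma edgeFinset_starGraph [Fintype (starGraph h a).edgeSet] :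
    (starGraph h a).edgeFinset = univ.map ⟨starEdge, starEdge_injective⟩ := by
  ext e
  induction e with
  | h v w => simp [starGraph_adj_iff, starEdge]

lemma card_edgeFinset_starGraph [Fintype (starGraph h a).edgeSet] :
    #(starGraph h a).edgeFinset = ∑ i, a i := by
  simp [edgeFinset_starGraph]

lemma dotProduct_lapMatrix_starGraph (x : StarVertex a → ℝ) :
    x ⬝ᵥ (starGraph h a).lapMatrix ℝ *ᵥ x =
      ∑ i, ∑ t ∈ range (a i), (x (starVertex i t) - x (starVertex i (t + 1))) ^ 2 := by
  rw [dotProduct_lapMatrix_mulVec, edgeFinset_starGraph, sum_map, Fintype.sum_sigma]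
  simp only [Finset.sum_range]
  refine sum_congr rfl fun i _ => sum_congr rfl fun j _ => ?_
  exact (edgeDiffSq_mk x _ _).trans (by rw [← starVertex_succ])

lemma preconnected_starGraph : (starGraph h a).Preconnected := by
  have hcenter : ∀ i, ∀ t ≤ a i, (starGraph h a).Reachable (starVertex i t) (Sum.inl ()) := by
    intro i t
    induction t with
    | zero => simp
    | succ t ih =>
      intro ht
      refine .trans (.symm (SimpleGraph.Adj.reachable ?_)) (ih (by omega))
      exact starGraph_adj_iff.2 ⟨⟨i, t, ht⟩, by rw [← starVertex_succ]⟩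
  have hcenter' : ∀ v, (starGraph h a).Reachable v (Sum.inl ()) := by
    rintro (c | p)
    · exact .refl _
    · exact starVertex_succ p ▸ hcenter p.1 (p.2 + 1) p.2.2
  exact fun v w => (hcenter' v).trans (hcenter' w).symm

lemma starGraph_adj_inr_iff {p : Σ i : Fin h, Fin (a i)} {v : StarVertex a} :
    (starGraph h a).Adj (Sum.inr p) v ↔
      v = starVertex p.1 p.2 ∨ v = starVertex p.1 (p.2 + 2) ∧ v ≠ Sum.inr p := by
  rw [starGraph_adj_iff]
  constructor
  · rintro ⟨q, hq⟩
    rcases Sym2.eq_iff.1 hq with ⟨h₁, rfl⟩ | ⟨h₁, h₂⟩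
    · obtain ⟨hi, hp⟩ := starVertex_eq_inr_iff.1 h₁
      have ha := congrArg a hi
      refine .inr ⟨(starVertex_eq_inr_iff.2 ⟨hi.symm, by omega⟩).symm, fun h => ?_⟩
      cases Sum.inr_injective h
      omega
    · cases h₂
      exact .inl h₁.symm
  · rintro (rfl | ⟨rfl, hne⟩)
    · exact ⟨p, Sym2.eq_swap⟩
    · have hlt : (p.2 : ℕ) + 1 < a p.1 := by
        by_contra hlt
        exact hne (starVertex_eq_inr_iff.2 ⟨rfl, by omega⟩)
      exact ⟨⟨p.1, p.2 + 1, hlt⟩, by rw [← starVertex_succ, ← starVertex_succ]⟩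

lemma lapMatrix_starGraph_sub_two_mulVec_inr (x : StarVertex a → ℝ) (p : Σ i : Fin h, Fin (a i)) :
    (((starGraph h a).lapMatrix ℝ - (2 : ℝ) • 1) *ᵥ x) (Sum.inr p) =
      -(x (starVertex p.1 p.2) + x (starVertex p.1 (p.2 + 2))) := by
  have hne : (starVertex p.1 p.2 : StarVertex a) ≠ starVertex p.1 (p.2 + 2) := fun h => by
    have := starVertex_inj.1 h
    omega
  have hterm : ∀ v, (if (starGraph h a).Adj (Sum.inr p) v then x (Sum.inr p) - x v else 0) =
      (if v = starVertex p.1 p.2 then x (Sum.inr p) - x v else 0) +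
        if v = starVertex p.1 (p.2 + 2) then x (Sum.inr p) - x v else 0 := fun v => by
    rw [starGraph_adj_inr_iff]
    grind
  rw [sub_mulVec, smul_mulVec, one_mulVec, Pi.sub_apply, lapMatrix_mulVec_apply_eq_sum]
  simp only [hterm, sum_add_distrib, sum_ite_eq', mem_univ, if_true, Pi.smul_apply, smul_eq_mul]
  ring

lemma lapMatrix_starGraph_sub_two_mulVec_starVertex (x : StarVertex a → ℝ) (i : Fin h) {t : ℕ}
    (ht : t < 2 * a i) :
    (((starGraph h a).lapMatrix ℝ - (2 : ℝ) • 1) *ᵥ x) (starVertex i (t + 1)) =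
      -(x (starVertex i t) + x (starVertex i (t + 2))) := by
  rcases lt_or_ge t (a i) with hlt | hge
  · exact (congrArg _ (starVertex_succ ⟨i, t, hlt⟩)).trans
      (lapMatrix_starGraph_sub_two_mulVec_inr x ⟨i, t, hlt⟩)
  · have hs : 2 * a i - t - 1 < a i := by omega
    have hv : (starVertex i (t + 1) : StarVertex a) = Sum.inr ⟨i, 2 * a i - t - 1, hs⟩ :=
      starVertex_eq_inr_iff.2 ⟨rfl, by dsimp only; omega⟩
    have hprev : (starVertex i (2 * a i - t - 1) : StarVertex a) = starVertex i (t + 2) :=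
      starVertex_inj.2 (by omega)
    have hnext : (starVertex i (2 * a i - t - 1 + 2) : StarVertex a) = starVertex i t :=
      starVertex_inj.2 (by omega)
    rw [hv, lapMatrix_starGraph_sub_two_mulVec_inr, hprev, hnext, add_comm]

lemma starGraph_adj_inl_inr_iff {c : Unit} {p : Σ i : Fin h, Fin (a i)} :
    (starGraph h a).Adj (Sum.inl c) (Sum.inr p) ↔ (p.2 : ℕ) = 0 := by
  rw [SimpleGraph.adj_comm, starGraph_adj_inr_iff]
  simp only [eq_comm (a := (Sum.inl c : StarVertex a)), starVertex_eq_inl_iff]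
  omega

lemma lapMatrix_starGraph_sub_two_mulVec_inl (x : StarVertex a → ℝ) (c : Unit) :
    (((starGraph h a).lapMatrix ℝ - (2 : ℝ) • 1) *ᵥ x) (Sum.inl c) =
      ∑ i, (x (Sum.inl ()) - x (starVertex i 1)) - 2 * x (Sum.inl ()) := by
  have hbranch : ∀ i, ∑ j : Fin (a i), (if (starGraph h a).Adj (Sum.inl c) (Sum.inr ⟨i, j⟩) then
      x (Sum.inl c) - x (Sum.inr ⟨i, j⟩) else 0) = x (Sum.inl ()) - x (starVertex i 1) := by
    intro i
    simp only [starGraph_adj_inl_inr_iff]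
    simp only [← starVertex_succ]
    rw [← Finset.sum_range fun t => if t = 0 then x (Sum.inl c) - x (starVertex i (t + 1)) else 0,
      sum_ite_eq']
    split_ifs with ha
    · rfl
    · rw [(starVertex_eq_inl_iff (c := ())).2 (by simp_all), sub_self]
  rw [sub_mulVec, smul_mulVec, one_mulVec, Pi.sub_apply, lapMatrix_mulVec_apply_eq_sum,
    Fintype.sum_sum_type, Fintype.sum_sigma]
  simp [hbranch]

/-! ### The median of the Laplacian spectrum -/

lemma sum_range_two_mul_sq_sub_sub_two_mul_sq (X : ℕ → ℝ) (N : ℕ)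
    (hX : ∀ l < N, X (2 * l) + X (2 * l + 2) = 0) :
    ∑ t ∈ range (2 * N), ((X t - X (t + 1)) ^ 2 - 2 * X (t + 1) ^ 2) = 0 := by
  induction N with
  | zero => simp
  | succ N ih =>
    rw [mul_add, mul_one, sum_range_succ, sum_range_succ, ih fun l hl => hX l (by omega),
      eq_neg_of_add_eq_zero_right (hX N N.lt_succ_self)]
    ring

lemma sum_range_two_mul_add_one_sq_sub_sub_two_mul_sq (X : ℕ → ℝ) (N : ℕ)
    (hX : ∀ l < N, X (2 * l + 1) + X (2 * l + 1 + 2) = 0) :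
    ∑ t ∈ range (2 * N + 1), ((X t - X (t + 1)) ^ 2 - 2 * X (t + 1) ^ 2) =
      2 * X 0 ^ 2 - (X 0 + X 1) ^ 2 := by
  rw [sum_range_succ', sum_range_two_mul_sq_sub_sub_two_mul_sq (fun t => X (t + 1)) N hX]
  ring

/-- The sums `x t + x (t + 2)` over the positions `t < a i` of the parity of `a i` on each branch
`i`; up to sign, these are the values of `(L - 2) x` at the vertices `t + 1`. -/
def starConstraint (a : Fin h → ℕ) :
    (StarVertex a → ℝ) →ₗ[ℝ] (Σ i : Fin h, Fin (a i / 2)) → ℝ :=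
  LinearMap.funLeft ℝ ℝ (fun p => starVertex p.1 (2 * p.2 + a p.1 % 2)) +
    LinearMap.funLeft ℝ ℝ (fun p => starVertex p.1 (2 * p.2 + a p.1 % 2 + 2))

lemma dotProduct_lapMatrix_starGraph_sub_two {iₕ : Fin h} (hodd : Odd (a iₕ))
    (heven : ∀ i, i ≠ iₕ → Even (a i)) {x : StarVertex a → ℝ} (hx : starConstraint a x = 0) :
    x ⬝ᵥ (starGraph h a).lapMatrix ℝ *ᵥ x - 2 * (x ⬝ᵥ x) =
      -(x (Sum.inl ()) + x (starVertex iₕ 1)) ^ 2 := by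
  have hx' : ∀ i, ∀ l < a i / 2, x (starVertex i (2 * l + a i % 2)) +
      x (starVertex i (2 * l + a i % 2 + 2)) = 0 := fun i l hl => congrFun hx ⟨i, l, hl⟩
  set g : Fin h → ℝ := fun i => ∑ t ∈ range (a i),
    ((x (starVertex i t) - x (starVertex i (t + 1))) ^ 2 - 2 * x (starVertex i (t + 1)) ^ 2)
  have hform : x ⬝ᵥ (starGraph h a).lapMatrix ℝ *ᵥ x - 2 * (x ⬝ᵥ x) =
      ∑ i, g i - 2 * x (Sum.inl ()) ^ 2 := by
    rw [dotProduct_lapMatrix_starGraph]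
    simp only [g, dotProduct, ← sq, sum_starVertex fun v => x v ^ 2,
      sum_sub_distrib, mul_add, mul_sum]
    ring
  have hg_even : ∀ i ≠ iₕ, g i = 0 := fun i hi => by
    have hN := Nat.two_mul_div_two_of_even (heven i hi)
    have := sum_range_two_mul_sq_sub_sub_two_mul_sq (fun t => x (starVertex i t)) (a i / 2)
      fun l hl => by simpa [Nat.even_iff.1 (heven i hi)] using hx' i l hl
    rwa [hN] at this
  have hg_odd : g iₕ = 2 * x (Sum.inl ()) ^ 2 - (x (Sum.inl ()) + x (starVertex iₕ 1)) ^ 2 := by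
    have hN := Nat.two_mul_div_two_add_one_of_odd hodd
    have := sum_range_two_mul_add_one_sq_sub_sub_two_mul_sq (fun t => x (starVertex iₕ t))
      (a iₕ / 2) fun l hl => by simpa [Nat.odd_iff.1 hodd] using hx' iₕ l hl
    rwa [hN, starVertex_zero] at this
  rw [hform, Fintype.sum_eq_single iₕ hg_even, hg_odd]
  ring

/-- The doubling map on the vertices of a starlike tree, `starVertex i t ↦ starVertex i (2 * t)`. -/
def starDouble : StarVertex a → StarVertex a
  | Sum.inl _ => Sum.inl ()
  | Sum.inr p => starVertex p.1 (2 * (p.2 + 1))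

/-- The sign `(-1) ^ t` of the vertex `starVertex i t`, for the proper `2`-colouring of a starlike
tree. -/
def starSign : StarVertex a → ℝ
  | Sum.inl _ => 1
  | Sum.inr p => (-1) ^ ((p.2 : ℕ) + 1)

lemma starDouble_starVertex {i : Fin h} {t : ℕ} (ht : t ≤ a i) :
    starDouble (starVertex i t : StarVertex a) = starVertex i (2 * t) := by
  cases t with
  | zero => simp [starDouble]
  | succ t => exact congrArg starDouble (starVertex_succ ⟨i, t, ht⟩)

lemma starSign_starVertex {i : Fin h} {t : ℕ} (ht : t ≤ a i) :
    starSign (starVertex i t : StarVertex a) = (-1) ^ t := by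
  cases t with
  | zero => simp [starSign]
  | succ t => exact congrArg starSign (starVertex_succ ⟨i, t, ht⟩)

lemma starSign_mul_self (v : StarVertex a) : starSign v * starSign v = 1 := by
  rcases v with c | p <;> simp [starSign, ← mul_pow]

lemma eq_of_starVertex_eq {i i' : Fin h} {s t : ℕ} (hs : 0 < s) (hs' : s ≤ 2 * a i)
    (hst : (starVertex i s : StarVertex a) = starVertex i' t) : i = i' := by
  rcases ht : (starVertex i' t : StarVertex a) with c | p
  · have := starVertex_eq_inl_iff.1 (hst.trans ht)
    omega
  · exact (starVertex_eq_inr_iff.1 (hst.trans ht)).1.trans (starVertex_eq_inr_iff.1 ht).1.symm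

lemma starDouble_injective : Function.Injective (starDouble (a := a)) := by
  rintro (c | p) (c' | q) hpq
  · rfl
  · have := starVertex_eq_inl_iff.1 hpq.symm
    omega
  · have := starVertex_eq_inl_iff.1 hpq
    omega
  · obtain ⟨i, j⟩ := p
    obtain ⟨i', j'⟩ := q
    obtain rfl : i = i' := eq_of_starVertex_eq (by omega) (by dsimp only; omega) hpq
    have := starVertex_inj.1 hpq
    dsimp only at this
    congr
    omega

lemma starVertex_odd_injective : Function.Injective fun p : Σ i : Fin h, Fin (a i) =>
    (starVertex p.1 (2 * p.2 + 1) : StarVertex a) := fun ⟨i, j⟩ ⟨i', j'⟩ hpq => by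
  obtain rfl : i = i' := eq_of_starVertex_eq (by omega) (by dsimp only; omega) hpq
  have := starVertex_inj.1 hpq
  dsimp only at this
  congr
  omega

/-- The map `x ↦ y` with `y t = (-1) ^ t * x (2 * t)` on each branch. It is an isometry which turns
the sums `x (2 * t) + x (2 * t + 2)`, the values of `-(L - 2) x`, into the increments of `y`. -/
noncomputable def alternatingDouble : (StarVertex a → ℝ) →ₗ[ℝ] StarVertex a → ℝ :=
  LinearMap.pi fun v => starSign v • LinearMap.proj (starDouble v)

lemma alternatingDouble_apply (x : StarVertex a → ℝ) (v : StarVertex a) :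
    alternatingDouble x v = starSign v * x (starDouble v) := rfl

lemma alternatingDouble_dotProduct_self (x : StarVertex a → ℝ) :
    alternatingDouble x ⬝ᵥ alternatingDouble x = x ⬝ᵥ x := by
  rw [dotProduct, dotProduct,
    ← (Finite.injective_iff_bijective.1 starDouble_injective).sum_comp fun v => x v * x v]
  refine sum_congr rfl fun v _ => ?_
  rw [alternatingDouble_apply, mul_mul_mul_comm, starSign_mul_self, one_mul]

lemma alternatingDouble_dotProduct_lapMatrix_le (x : StarVertex a → ℝ) :
    alternatingDouble x ⬝ᵥ (starGraph h a).lapMatrix ℝ *ᵥ alternatingDouble x ≤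
      (((starGraph h a).lapMatrix ℝ - (2 : ℝ) • 1) *ᵥ x) ⬝ᵥ
        (((starGraph h a).lapMatrix ℝ - (2 : ℝ) • 1) *ᵥ x) := by
  set z := ((starGraph h a).lapMatrix ℝ - (2 : ℝ) • 1) *ᵥ x with hz
  have hterm : ∀ i, ∀ t ∈ range (a i),
      (alternatingDouble x (starVertex i t) - alternatingDouble x (starVertex i (t + 1))) ^ 2 =
        z (starVertex i (2 * t + 1)) ^ 2 := fun i t ht => by
    have ht₁ : t + 1 ≤ a i := mem_range.1 ht
    have ht₀ : t ≤ a i := by omega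
    rw [alternatingDouble_apply, alternatingDouble_apply, starSign_starVertex ht₀,
      starSign_starVertex ht₁, starDouble_starVertex ht₀, starDouble_starVertex ht₁, hz,
      lapMatrix_starGraph_sub_two_mulVec_starVertex _ _ (by omega),
      neg_sq, Nat.mul_succ]
    linear_combination (x (starVertex i (2 * t)) + x (starVertex i (2 * t + 2))) ^ 2 *
      (even_two_mul t).neg_one_pow (α := ℝ)
  rw [dotProduct_lapMatrix_starGraph, sum_congr rfl fun i _ => sum_congr rfl (hterm i)]
  simp only [Finset.sum_range]
  rw [← Fintype.sum_sigma' fun i (j : Fin (a i)) => z (starVertex i (2 * j + 1)) ^ 2]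
  calc ∑ p : Σ i, Fin (a i), z (starVertex p.1 (2 * p.2 + 1)) ^ 2
      = ∑ v ∈ univ.map ⟨_, starVertex_odd_injective⟩, z v ^ 2 := by rw [sum_map]; rfl
    _ ≤ ∑ v, z v ^ 2 := sum_le_univ_sum_of_nonneg fun v => sq_nonneg _
    _ = z ⬝ᵥ z := by simp only [dotProduct, sq]

lemma four_div_sq_mul_dotProduct_self_le {x : StarVertex a → ℝ}
    (hx : ∑ v, alternatingDouble x v = 0) :
    (2 / (1 + ∑ i, a i : ℕ)) ^ 2 * (x ⬝ᵥ x) ≤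
      (((starGraph h a).lapMatrix ℝ - (2 : ℝ) • 1) *ᵥ x) ⬝ᵥ
        (((starGraph h a).lapMatrix ℝ - (2 : ℝ) • 1) *ᵥ x) := by
  have hpoincare := four_mul_dotProduct_self_le_of_sum_eq_zero preconnected_starGraph hx
  rw [alternatingDouble_dotProduct_self] at hpoincare
  have hcard : Fintype.card (StarVertex a) = 1 + ∑ i, a i := by simp
  rw [hcard] at hpoincare
  rw [div_pow, div_mul_eq_mul_div, div_le_iff₀ (by positivity), mul_comm _ (_ ^ 2)]
  norm_num only
  exact hpoincare.trans (mul_le_mul_of_nonneg_left (alternatingDouble_dotProduct_lapMatrix_le x)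
    (sq_nonneg _))

lemma one_add_sum_eq_two_mul {iₕ : Fin h} (hodd : Odd (a iₕ)) (heven : ∀ i, i ≠ iₕ → Even (a i)) :
    1 + ∑ i, a i = 2 * (∑ i, a i / 2 + 1) := by
  have : ∑ i, a i = 2 * ∑ i, a i / 2 + ∑ i, a i % 2 := by
    rw [mul_sum, ← sum_add_distrib]
    exact sum_congr rfl fun i _ => (Nat.div_add_mod _ _).symm
  rw [this, Fintype.sum_eq_single iₕ fun i hi => Nat.even_iff.1 (heven i hi), Nat.odd_iff.1 hodd]
  ring

lemma card_two_lt_eigenvalues_le {iₕ : Fin h} (hodd : Odd (a iₕ))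
    (heven : ∀ i, i ≠ iₕ → Even (a i)) (hL : ((starGraph h a).lapMatrix ℝ).IsHermitian) :
    #{v | 2 < hL.eigenvalues v} ≤ ∑ i, a i / 2 := by
  refine (card_lt_eigenvalues_le_finrank hL 2 (starConstraint a) fun x hx => ?_).trans_eq (by simp)
  refine sub_nonpos.1 ((dotProduct_lapMatrix_starGraph_sub_two hodd heven hx).trans_le ?_)
  exact neg_nonpos.2 (sq_nonneg _)

lemma card_eigenvalues_lt_two_le {iₕ : Fin h} (hodd : Odd (a iₕ))
    (heven : ∀ i, i ≠ iₕ → Even (a i)) (hL : ((starGraph h a).lapMatrix ℝ).IsHermitian) :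
    #{v | hL.eigenvalues v < 2} ≤ ∑ i, a i / 2 + 1 := by
  let ψ : (StarVertex a → ℝ) →ₗ[ℝ] ℝ :=
    LinearMap.proj (R := ℝ) (φ := fun _ : StarVertex a => ℝ) (Sum.inl ()) +
      LinearMap.proj (R := ℝ) (φ := fun _ : StarVertex a => ℝ) (starVertex iₕ 1)
  refine (card_eigenvalues_lt_le_finrank hL 2 ((starConstraint a).prod ψ) fun x hx => ?_).trans_eq
    (by simp)
  obtain ⟨hx, hψ⟩ : starConstraint a x = 0 ∧ x (Sum.inl ()) + x (starVertex iₕ 1) = 0 :=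
    Prod.ext_iff.1 hx
  have hform := dotProduct_lapMatrix_starGraph_sub_two hodd heven hx
  rw [hψ] at hform
  linarith

lemma card_abs_eigenvalues_sub_two_lt_le (hL : ((starGraph h a).lapMatrix ℝ).IsHermitian) :
    #{v | |hL.eigenvalues v - 2| < 2 / (1 + ∑ i, a i : ℕ)} ≤ 1 :=
  (card_abs_eigenvalues_sub_lt_le_finrank hL 2 _
    (LinearMap.lsum ℝ (fun _ => ℝ) ℝ (fun _ => LinearMap.id) ∘ₗ alternatingDouble)
    fun _ hx => four_div_sq_mul_dotProduct_self_le (by simpa using hx)).trans_eq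
      (Module.finrank_self ℝ)

lemma sum_abs_eigenvalues_starGraph_sub {iₕ : Fin h} (hodd : Odd (a iₕ))
    (heven : ∀ i, i ≠ iₕ → Even (a i)) (hL : ((starGraph h a).lapMatrix ℝ).IsHermitian) :
    ∑ v, |hL.eigenvalues v - (2 - 2 / (1 + ∑ i, a i : ℕ))| = ∑ v, |hL.eigenvalues v - 2| := by
  have hδ : (0 : ℝ) < 2 / (1 + ∑ i, a i : ℕ) := by positivity
  refine sum_abs_sub_eq_of_card_le _ (sub_lt_self _ hδ) (m := ∑ i, a i / 2 + 1)
    (by simpa using one_add_sum_eq_two_mul hodd heven) ?_ (card_eigenvalues_lt_two_le hodd heven hL)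
  refine (card_le_card fun v hv => ?_).trans ((card_union_le _ _).trans (add_le_add
    (card_two_lt_eigenvalues_le hodd heven hL) (card_abs_eigenvalues_sub_two_lt_le hL)))
  simp only [mem_union, mem_filter, mem_univ, true_and] at hv ⊢
  refine or_iff_not_imp_left.2 fun h => ?_
  rw [abs_sub_lt_iff]
  constructor <;> linarith

/-! ### Exchanging branches -/

/-- The map exchanging branches `i₁` and `i₂` of a starlike tree at the positions satisfying `S`. -/
noncomputable def starSwap (i₁ i₂ : Fin h) (S : ℕ → Prop) : StarVertex a → StarVertex a
  | Sum.inl c => Sum.inl c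
  | Sum.inr p => if S (p.2 + 1) then starVertex (Equiv.swap i₁ i₂ p.1) (p.2 + 1) else Sum.inr p

variable {i₁ i₂ i : Fin h} {S : ℕ → Prop} {t : ℕ}

lemma starSwap_starVertex_of_pos (ht : t ≤ a i) (hS : S t) :
    starSwap i₁ i₂ S (starVertex i t : StarVertex a) = starVertex (Equiv.swap i₁ i₂ i) t := by
  cases t with
  | zero => simp [starSwap]
  | succ t => exact (congrArg _ (starVertex_succ ⟨i, t, ht⟩)).trans (if_pos hS)

lemma starSwap_starVertex_of_neg (ht : t ≤ a i) (hS : ¬ S t) :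
    starSwap i₁ i₂ S (starVertex i t : StarVertex a) = starVertex i t := by
  cases t with
  | zero => simp [starSwap]
  | succ t =>
    have hv : (starVertex i (t + 1) : StarVertex a) = _ := starVertex_succ ⟨i, t, ht⟩
    exact (congrArg _ hv).trans ((if_neg hS).trans hv.symm)

lemma starSwap_involutive (heq : a i₁ = a i₂) (S : ℕ → Prop) :
    Function.Involutive (starSwap (a := a) i₁ i₂ S) := by
  rintro (c | p)
  · rfl
  · rw [← starVertex_succ]
    have hp : (p.2 : ℕ) + 1 ≤ a p.1 := p.2.2
    by_cases hS : S (p.2 + 1)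
    · rw [starSwap_starVertex_of_pos hp hS, starSwap_starVertex_of_pos _ hS,
        Equiv.swap_apply_self]
      rwa [Equiv.apply_swap_eq_self heq]
    · rw [starSwap_starVertex_of_neg hp hS, starSwap_starVertex_of_neg hp hS]

lemma starVertex_length_add_one (i : Fin h) :
    (starVertex i (a i + 1) : StarVertex a) = starVertex i (a i) := starVertex_inj.2 (by omega)

lemma lapMatrix_starGraph_sub_two_mulVec_comp_starSwap_starVertex (heq : a i₁ = a i₂)
    (heven : Even (a i₁)) (x : StarVertex a → ℝ) (ht : t < a i) :
    (((starGraph h a).lapMatrix ℝ - (2 : ℝ) • 1) *ᵥ (x ∘ starSwap i₁ i₂ Odd))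
        (starSwap i₁ i₂ Even (starVertex i (t + 1))) =
      (((starGraph h a).lapMatrix ℝ - (2 : ℝ) • 1) *ᵥ x) (starVertex i (t + 1)) +
        if t + 1 = a i then
          x (starVertex i (a i)) - x (starVertex (Equiv.swap i₁ i₂ i) (a i)) else 0 := by
  have hσ : a (Equiv.swap i₁ i₂ i) = a i := Equiv.apply_swap_eq_self heq i
  rw [lapMatrix_starGraph_sub_two_mulVec_starVertex x i (by omega)]
  rcases Nat.even_or_odd t with hte | hto
  · have hte' : ∀ {s}, Even s → ¬ Odd s := Nat.not_odd_iff_even.2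
    rw [starSwap_starVertex_of_neg ht (Nat.not_even_iff_odd.2 hte.add_one),
      lapMatrix_starGraph_sub_two_mulVec_starVertex _ i (by omega), Function.comp_apply,
      Function.comp_apply, starSwap_starVertex_of_neg ht.le (hte' hte)]
    split_ifs with hlast
    · have hodd : Odd (a i) := hlast ▸ hte.add_one
      have hfix : Equiv.swap i₁ i₂ i = i := Equiv.swap_apply_of_ne_of_ne
        (by rintro rfl; exact hte' heven hodd) (by rintro rfl; exact hte' (heq ▸ heven) hodd)
      rw [show t + 2 = a i + 1 by omega, starVertex_length_add_one,
        starSwap_starVertex_of_pos le_rfl hodd, hfix, sub_self, add_zero]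
    · rw [starSwap_starVertex_of_neg (by omega) (hte' (hte.add even_two)), add_zero]
  · rw [starSwap_starVertex_of_pos ht hto.add_one,
      lapMatrix_starGraph_sub_two_mulVec_starVertex _ _ (by omega), Function.comp_apply,
      Function.comp_apply, starSwap_starVertex_of_pos (by omega) hto, Equiv.swap_apply_self]
    split_ifs with hlast
    · have hend := starVertex_length_add_one (a := a) (Equiv.swap i₁ i₂ i)
      rw [hσ] at hend
      rw [show t + 2 = a i + 1 by omega, hend, starVertex_length_add_one,
        starSwap_starVertex_of_neg hσ.ge (Nat.not_odd_iff_even.2 (hlast ▸ hto.add_one))]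
      ring
    · rw [starSwap_starVertex_of_pos (by omega) (hto.add_even even_two), Equiv.swap_apply_self,
        add_zero]

lemma lapMatrix_starGraph_sub_two_mulVec_comp_starSwap_inl (heq : a i₁ = a i₂)
    (x : StarVertex a → ℝ) (c : Unit) :
    (((starGraph h a).lapMatrix ℝ - (2 : ℝ) • 1) *ᵥ (x ∘ starSwap i₁ i₂ Odd)) (Sum.inl c) =
      (((starGraph h a).lapMatrix ℝ - (2 : ℝ) • 1) *ᵥ x) (Sum.inl c) := by
  have hfirst : ∀ i, starSwap i₁ i₂ Odd (starVertex i 1 : StarVertex a) =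
      starVertex (Equiv.swap i₁ i₂ i) 1 := fun i => by
    rcases Nat.eq_zero_or_pos (a i) with hi | hi
    · have hσ : a (Equiv.swap i₁ i₂ i) = 0 := (Equiv.apply_swap_eq_self heq i).trans hi
      simp [starVertex, hi, hσ, starSwap]
    · exact starSwap_starVertex_of_pos hi odd_one
  have hcenter : starSwap i₁ i₂ Odd (Sum.inl () : StarVertex a) = Sum.inl () := rfl
  simp only [lapMatrix_starGraph_sub_two_mulVec_inl, Function.comp_apply, hfirst, hcenter]
  rw [Equiv.sum_comp (Equiv.swap i₁ i₂) fun i => x (Sum.inl ()) - x (starVertex i 1)]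

lemma sub_smul_single_sub_single_starVertex (hne : i₁ ≠ i₂) (heq : a i₁ = a i₂)
    {j₁ : Fin (a i₁)} {j₂ : Fin (a i₂)} (hj₁ : (j₁ : ℕ) + 1 = a i₁) (hj₂ : (j₂ : ℕ) + 1 = a i₂)
    (x : StarVertex a → ℝ) (ht : t < a i) :
    ((x (Sum.inr ⟨i₁, j₁⟩) - x (Sum.inr ⟨i₂, j₂⟩)) •
        (Pi.single (Sum.inr ⟨i₁, j₁⟩) 1 - Pi.single (Sum.inr ⟨i₂, j₂⟩) 1 : StarVertex a → ℝ))
        (starVertex i (t + 1)) =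
      if t + 1 = a i then
        x (starVertex i (a i)) - x (starVertex (Equiv.swap i₁ i₂ i) (a i)) else 0 := by
  have hv₁ : starVertex i₁ (a i₁) = Sum.inr ⟨i₁, j₁⟩ := hj₁ ▸ starVertex_succ ⟨i₁, j₁⟩
  have hv₂ : starVertex i₂ (a i₂) = Sum.inr ⟨i₂, j₂⟩ := hj₂ ▸ starVertex_succ ⟨i₂, j₂⟩
  have hmin : min (t + 1) (2 * a i + 1 - (t + 1)) = t + 1 := by omega
  simp only [Pi.smul_apply, Pi.sub_apply, Pi.single_apply, smul_eq_mul, starVertex_eq_inr_iff,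
    hmin, hj₁, hj₂]
  rcases eq_or_ne i i₁ with rfl | h₁
  · rw [Equiv.swap_apply_left, hv₁, heq, hv₂]
    simp [hne]
  rcases eq_or_ne i i₂ with rfl | h₂
  · rw [Equiv.swap_apply_right, hv₂, ← heq, hv₁]
    by_cases hlast : t + 1 = a i₁ <;> simp [hne.symm, hlast]
  · simp [h₁, h₂, Equiv.swap_apply_of_ne_of_ne]

lemma not_starGraph_adj_inr_inr (hne : i₁ ≠ i₂) {j₁ : Fin (a i₁)} {j₂ : Fin (a i₂)} :
    ¬ (starGraph h a).Adj (Sum.inr ⟨i₁, j₁⟩) (Sum.inr ⟨i₂, j₂⟩) := fun hadj => by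
  rcases starGraph_adj_inr_iff.1 hadj with hv | ⟨hv, -⟩
  exacts [hne (starVertex_eq_inr_iff.1 hv.symm).1, hne (starVertex_eq_inr_iff.1 hv.symm).1]

lemma lapMatrix_starGraph_sup_edge_sub_two_eq_submatrix (hne : i₁ ≠ i₂) (heq : a i₁ = a i₂)
    (heven : Even (a i₁)) {j₁ : Fin (a i₁)} {j₂ : Fin (a i₂)} (hj₁ : (j₁ : ℕ) + 1 = a i₁)
    (hj₂ : (j₂ : ℕ) + 1 = a i₂) :
    (starGraph h a ⊔ SimpleGraph.edge (Sum.inr ⟨i₁, j₁⟩) (Sum.inr ⟨i₂, j₂⟩)).lapMatrix ℝ -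
        (2 : ℝ) • 1 =
      ((starGraph h a).lapMatrix ℝ - (2 : ℝ) • 1).submatrix
        (starSwap_involutive heq Even).toPerm (starSwap_involutive heq Odd).toPerm := by
  refine Matrix.toLin'.injective (LinearMap.ext fun x => ?_)
  rw [toLin'_apply, toLin'_apply, submatrix_mulVec_equiv, Function.Involutive.toPerm_symm,
    sub_mulVec, lapMatrix_sup_edge_mulVec (by simp [hne]) (not_starGraph_adj_inr_inr hne),
    add_sub_right_comm, ← sub_mulVec]
  ext (c | p)
  · rw [Pi.add_apply]
    refine .trans (by simp) (lapMatrix_starGraph_sub_two_mulVec_comp_starSwap_inl heq x c).symm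
  · have hedge := sub_smul_single_sub_single_starVertex hne heq hj₁ hj₂ x p.2.2
    have hswap :=
      lapMatrix_starGraph_sub_two_mulVec_comp_starSwap_starVertex heq heven x p.2.2
    rw [starVertex_succ p] at hedge hswap
    rw [Pi.add_apply, hedge]
    exact hswap.symm

lemma two_mul_card_edgeFinset_starGraph_div :
    (2 * #(starGraph h a).edgeFinset / Fintype.card (StarVertex a) : ℝ) =
      2 - 2 / (1 + ∑ i, a i : ℕ) := by
  rw [card_edgeFinset_starGraph, Fintype.card_sum, Fintype.card_unit, Fintype.card_sigma]
  simp only [Fintype.card_fin]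
  field_simp
  push_cast
  ring

lemma two_mul_card_edgeFinset_starGraph_sup_edge_div (hne : i₁ ≠ i₂) {j₁ : Fin (a i₁)}
    {j₂ : Fin (a i₂)} :
    (2 * #(starGraph h a ⊔ SimpleGraph.edge (Sum.inr ⟨i₁, j₁⟩) (Sum.inr ⟨i₂, j₂⟩)).edgeFinset /
      Fintype.card (StarVertex a) : ℝ) = 2 := by
  have hcard := SimpleGraph.card_edgeFinset_sup_edge (starGraph h a)
    (not_starGraph_adj_inr_inr hne (j₁ := j₁) (j₂ := j₂)) (by simp [hne])
  rw [card_edgeFinset_starGraph] at hcard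
  rw [div_eq_iff (Nat.cast_ne_zero.2 Fintype.card_ne_zero)]
  norm_cast
  convert congrArg (2 * ·) hcard
  simp [add_comm]

end Starlike

theorem starlike_equienergetic_general {h : ℕ} (a : Fin h → ℕ) (i₁ i₂ iₕ : Fin h) (hne : i₁ ≠ i₂)
    (heq : a i₁ = a i₂) (heven : ∀ i, i ≠ iₕ → Even (a i)) (hodd : Odd (a iₕ))
    (j₁ : Fin (a i₁)) (j₂ : Fin (a i₂)) (hj₁ : (j₁ : ℕ) + 1 = a i₁) (hj₂ : (j₂ : ℕ) + 1 = a i₂) :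
    LEnergy (starGraph h a) =
      LEnergy (starGraph h a ⊔
        SimpleGraph.fromEdgeSet {s(Sum.inr ⟨i₁, j₁⟩, Sum.inr ⟨i₂, j₂⟩)}) := by
  change _ = LEnergy (starGraph h a ⊔ SimpleGraph.edge (Sum.inr ⟨i₁, j₁⟩) (Sum.inr ⟨i₂, j₂⟩))
  have heven₁ : Even (a i₁) := by
    by_cases hi : i₁ = iₕ
    · exact heq ▸ heven i₂ (hi ▸ hne.symm)
    · exact heven i₁ hi
  have hL := (starGraph h a).isHermitian_lapMatrix ℝ
  have hL' := (starGraph h a ⊔ SimpleGraph.edge (Sum.inr ⟨i₁, j₁⟩)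
    (Sum.inr ⟨i₂, j₂⟩)).isHermitian_lapMatrix ℝ
  rw [LEnergy_eq_sum_abs_eigenvalues_sub hL two_mul_card_edgeFinset_starGraph_div,
    LEnergy_eq_sum_abs_eigenvalues_sub hL' (two_mul_card_edgeFinset_starGraph_sup_edge_div hne),
    sum_abs_eigenvalues_starGraph_sub hodd heven]
  exact (sum_abs_eigenvalues_sub_eq_of_submatrix hL hL' 2 _ _
    (lapMatrix_starGraph_sup_edge_sub_two_eq_submatrix hne heq heven₁ hj₁ hj₂)).symm

/-- Let `G ∈ S_{n,k}` be the starlike tree on `n` vertices whose central vertex `u` is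
adjacent to one end of each of `h ≥ 3` paths `P_{a 1}, …, P_{a h}`, where `a i` is even for
`i ≤ h-1`, the first two branches have `a i₁ = a i₂ = k ≥ 2` vertices, and the last branch
has `a iₕ < n/2` vertices, `a iₕ` odd. Let `G'` be obtained from `G` by adding an edge
between the ends farthest from `u` (index `k - 1`) of the two branches of length `k`
(so `G'` is unicyclic, containing `C_{2k+1}`). Then `LE(G) = LE(G')`. -/
theorem starlike_equienergetic (h k n : ℕ) (hh : 3 ≤ h) (hk : 2 ≤ k) (a : Fin h → ℕ)
    (hpos : ∀ i, 1 ≤ a i)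
    (i₁ i₂ iₕ : Fin h) (hi₁ : (i₁ : ℕ) = 0) (hi₂ : (i₂ : ℕ) = 1) (hiₕ : (iₕ : ℕ) = h - 1)
    (ha₁ : a i₁ = k) (ha₂ : a i₂ = k)
    (heven : ∀ i : Fin h, (i : ℕ) < h - 1 → Even (a i))
    (hodd : Odd (a iₕ))
    (hn : n = 1 + ∑ i, a i) (hah : a iₕ < n / 2)
    (j₁ : Fin (a i₁)) (j₂ : Fin (a i₂)) (hj₁ : (j₁ : ℕ) = k - 1) (hj₂ : (j₂ : ℕ) = k - 1) :
    LEnergy (starGraph h a) =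
      LEnergy (starGraph h a ⊔
        SimpleGraph.fromEdgeSet {s(Sum.inr ⟨i₁, j₁⟩, Sum.inr ⟨i₂, j₂⟩)}) := by
  have heven' : ∀ i, i ≠ iₕ → Even (a i) := fun i hi =>
    heven i (by have := i.2; have := Fin.val_ne_of_ne hi; omega)
  have hne : i₁ ≠ i₂ := Fin.ne_of_val_ne (by omega)
  exact starlike_equienergetic_general a i₁ i₂ iₕ hne (ha₁.trans ha₂.symm) heven' hodd j₁ j₂
    (by omega) (by omega)
end

section
/- For every integer ℓ ≥ 2, there exist ℓ pairwise non-cospectral (with respect to the Laplacian) connected unicyclic graphs on n = 2ℓ² + 2ℓ + 2 vertices, all having the same Laplacian energy. -/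
open scoped Classical

/-!
Let `P` and `Q` be two equally long legs of a tree hanging from the same vertex. On the vectors
supported on `P ∪ Q` and antisymmetric under swapping them, the Laplacian acts as the Laplacian `B`
of a path grounded at one end; on the orthogonal complement it does not see an edge joining the
two tips. Adding that edge thus only replaces `B` by `B + 2E`, where `E` is the matrix unit of the
tip. Both `B` and `B + 2E` differ from a diagonal matrix by the adjacency matrix of a bipartite
graph, whose sign can be changed by conjugation, and this turns `B + 2E` into `4 - B`. The new graph
is unicyclic, so its average degree is `2`, and since `|μ - 2|` is invariant under `μ ↦ 4 - μ`, the
Laplacian energy does not depend on the pair of legs that was closed. The spectrum does: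
`det (B + 2E) / det B` is the length of the cycle.
-/

open Matrix Polynomial SimpleGraph

section CharacteristicPolynomial

variable {R m V : Type*} [CommRing R] [Fintype m] [DecidableEq m] [Fintype V] [DecidableEq V]

theorem charpoly_add_mul_mul_charpoly {L : Matrix V V R} {B : Matrix m m R} {J : Matrix V m R}
    (hJ : L * J = J * B) (K : Matrix m V R) :
    (L + J * K).charpoly * B.charpoly = L.charpoly * (B + K * J).charpoly := by
  have hinv : fromBlocks 1 (-J) 0 1 * fromBlocks 1 J 0 1 = (1 : Matrix (V ⊕ m) (V ⊕ m) R) := by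
    simp [fromBlocks_multiply]
  have hconj : fromBlocks (L + J * K) 0 K B =
      fromBlocks 1 J 0 1 * (fromBlocks L 0 K (B + K * J) * fromBlocks 1 (-J) 0 1) := by
    simp [fromBlocks_multiply, hJ]
  rw [← charpoly_fromBlocks_zero₁₂, ← charpoly_fromBlocks_zero₁₂, hconj, charpoly_mul_comm,
    Matrix.mul_assoc, hinv, Matrix.mul_one]

theorem charpoly_scalar_sub (B : Matrix m m R) (c : R) :
    (scalar m c - B).charpoly = (-1) ^ Fintype.card m * B.charpoly.comp (C c - X) := by
  have h : charmatrix (scalar m c - B) =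
      -(compRingHom (C c - X)).mapMatrix (charmatrix B) := by
    ext1 i j
    by_cases hij : i = j
    · subst hij
      simp only [scalar_apply, charmatrix_apply_eq, Matrix.sub_apply, diagonal_apply_eq, map_sub,
        RingHom.mapMatrix_apply, coe_compRingHom, Matrix.neg_apply, map_apply, sub_comp, X_comp,
        C_comp, neg_sub]
      ring
    · simp [charmatrix_apply_ne, hij]
  rw [Matrix.charpoly, h, det_neg, ← RingHom.map_det]
  rfl

theorem roots_charpoly_scalar_sub [IsDomain R] (B : Matrix m m R) (c : R) :
    (scalar m c - B).charpoly.roots = B.charpoly.roots.map (c - ·) := by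
  have hlin : C c - X = C (-1) * X + C c := by
    rw [C_neg, C_1]
    ring
  have hsign : ((-1 : R[X]) ^ Fintype.card m) = C ((-1) ^ Fintype.card m) := by simp
  have hinv : Ring.inverse (-1 : R) = -1 := Ring.inverse_unit (-1 : Rˣ)
  rw [charpoly_scalar_sub, hlin, hsign, roots_C_mul _ (by simp),
    roots_comp_C_mul_X_add_C _ _ _ isUnit_one.neg, hinv]
  simp

theorem det_add_single_of_mul_eq_one {A G : Matrix m m R} (hAG : A * G = 1) (i j : m) (c : R) :
    (A + single i j c).det = A.det * (1 + c * G j i) := by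
  have hfactor : A + single i j c = A * (1 + G * single i j c) := by
    rw [Matrix.mul_add, Matrix.mul_one, ← Matrix.mul_assoc, hAG, Matrix.one_mul]
  have hrank : G * single i j c =
      replicateCol Unit (G *ᵥ Pi.single i c) * replicateRow Unit (Pi.single j (1 : R)) := by
    have hsingle : single i j c = vecMulVec (Pi.single i c) (Pi.single j 1) := by
      ext k l
      simp only [single_apply, vecMulVec_apply, Pi.single_apply]
      grind
    rw [← vecMulVec_eq, ← mul_vecMulVec, hsingle]
  rw [hfactor, det_mul, hrank, det_one_add_replicateCol_mul_replicateRow]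
  simp [mul_comm]

theorem charpoly_eq_of_roots_eq_of_isHermitian {𝕜 n : Type*} [RCLike 𝕜] [Fintype n] [DecidableEq n]
    {A : Matrix m m 𝕜} {B : Matrix n n 𝕜} (hA : A.IsHermitian) (hB : B.IsHermitian)
    (h : A.charpoly.roots = B.charpoly.roots) : A.charpoly = B.charpoly := by
  rw [hA.splits_charpoly.eq_prod_roots_of_monic A.charpoly_monic, h,
    ← hB.splits_charpoly.eq_prod_roots_of_monic B.charpoly_monic]

/-- The signs of the two colour classes conjugate `A` into `-A`. -/
theorem charpoly_diagonal_add_adjMatrix (G : SimpleGraph V) [DecidableRel G.Adj]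
    (color : G.Coloring Bool) (d : V → R) :
    (diagonal d + G.adjMatrix R).charpoly = (diagonal d - G.adjMatrix R).charpoly := by
  let S : Matrix V V R := diagonal fun v => if color v then 1 else -1
  have hS : S * S = 1 := by
    rw [diagonal_mul_diagonal, ← diagonal_one]
    congr 1
    ext v
    cases color v <;> simp
  have hconj : diagonal d + G.adjMatrix R = S * ((diagonal d - G.adjMatrix R) * S) := by
    ext v w
    rw [diagonal_mul, mul_diagonal]
    obtain rfl | hvw := eq_or_ne v w
    · cases color v <;> simp
    · by_cases hadj : G.Adj v w
      · have := color.valid hadj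
        cases hv : color v <;> cases hw : color w <;> simp_all
      · simp [hvw, hadj]
  rw [hconj, charpoly_mul_comm, Matrix.mul_assoc, hS, Matrix.mul_one]

end CharacteristicPolynomial

section GroundedPath

variable (R : Type*) [CommRing R] (n : ℕ)

/-- The Laplacian of a path on `n + 1` vertices whose vertex `0` has one further, grounded
neighbour. -/
noncomputable def groundedPathLaplacian : Matrix (Fin (n + 1)) (Fin (n + 1)) R :=
  (pathGraph (n + 1)).lapMatrix R + single 0 0 1

variable {R n}

theorem adjMatrix_pathGraph_mulVec (f : ℕ → R) (i : Fin (n + 1)) :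
    ((pathGraph (n + 1)).adjMatrix R *ᵥ fun j => f (j + 1)) i =
      f i + f (i + 2) - (if i = 0 then f 0 else 0) -
        (if i = Fin.last n then f (n + 2) else 0) := by
  let g : ℕ → R := fun t => (if t = i then f t else 0) + (if t = i + 2 then f t else 0)
  have hg (j : Fin (n + 1)) :
      (pathGraph (n + 1)).adjMatrix R i j * f (j + 1) = g (j + 1) := by
    simp only [adjMatrix_apply, pathGraph_adj, g]
    grind
  have hsum : ∑ j : Fin (n + 1), g (j + 1) + g 0 = ∑ t ∈ Finset.range (n + 2), g t := by
    rw [Finset.sum_range_succ', Fin.sum_univ_eq_sum_range (fun t => g (t + 1))]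
  simp only [mulVec, dotProduct, hg, eq_sub_of_add_eq hsum]
  simp only [g, Finset.sum_add_distrib, Finset.sum_ite_eq', Finset.mem_range, Fin.ext_iff,
    Fin.val_zero, Fin.val_last]
  grind

theorem groundedPathLaplacian_eq_diagonal_sub :
    groundedPathLaplacian R n =
      diagonal (2 - Pi.single (Fin.last n) 1) - (pathGraph (n + 1)).adjMatrix R := by
  have hdeg (i : Fin (n + 1)) : ((pathGraph (n + 1)).degree i : R) =
      2 - (if i = 0 then 1 else 0) - (if i = Fin.last n then 1 else 0) := by
    have h := adjMatrix_pathGraph_mulVec (fun _ => (1 : R)) i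
    rwa [show (fun _ => 1) = Function.const (Fin (n + 1)) (1 : R) from rfl,
      adjMatrix_mulVec_const_apply, mul_one, one_add_one_eq_two] at h
  ext i j
  obtain rfl | hij := eq_or_ne i j
  · simp only [groundedPathLaplacian, lapMatrix, degMatrix, hdeg, Matrix.add_apply,
      Matrix.sub_apply, diagonal_apply_eq, adjMatrix_apply, SimpleGraph.irrefl, ↓reduceIte,
      sub_zero, single_apply, and_self, Pi.sub_apply, Pi.ofNat_apply, Pi.single_apply]
    grind
  · simp only [groundedPathLaplacian, lapMatrix, degMatrix, Matrix.add_apply, Matrix.sub_apply,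
      diagonal_apply_ne _ hij, adjMatrix_apply, zero_sub, single_apply]
    grind

theorem groundedPathLaplacian_add_single_eq :
    groundedPathLaplacian R n + single (Fin.last n) (Fin.last n) 2 =
      diagonal (2 + Pi.single (Fin.last n) 1) - (pathGraph (n + 1)).adjMatrix R := by
  have : (2 + Pi.single (Fin.last n) 1 : Fin (n + 1) → R) =
      2 - Pi.single (Fin.last n) 1 + Pi.single (Fin.last n) 2 := by
    rw [← one_add_one_eq_two (R := R), Pi.single_add]
    abel
  rw [groundedPathLaplacian_eq_diagonal_sub, this, ← diagonal_single, sub_add_eq_add_sub]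
  exact congrArg (· - _) (diagonal_add _ _)

theorem charpoly_groundedPathLaplacian_add_single :
    (groundedPathLaplacian R n + single (Fin.last n) (Fin.last n) 2).charpoly =
      (scalar _ 4 - groundedPathLaplacian R n).charpoly := by
  rw [groundedPathLaplacian_add_single_eq,
    ← charpoly_diagonal_add_adjMatrix _ (pathGraph.bicoloring (n + 1)),
    groundedPathLaplacian_eq_diagonal_sub, ← sub_add, scalar_apply, diagonal_sub]
  congr 3
  ext i
  simp only [Pi.add_apply, Pi.ofNat_apply, Pi.sub_apply]
  ring

variable (R n) in
/-- The Green's function of the path grounded next to vertex `0`. -/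
def groundedPathGreen : Matrix (Fin (n + 1)) (Fin (n + 1)) R :=
  of fun i j => ((min (i + 1) (j + 1) : ℕ) : R)

theorem groundedPathLaplacian_mul_groundedPathGreen :
    groundedPathLaplacian R n * groundedPathGreen R n = 1 := by
  ext i j
  let f : ℕ → R := fun t => ((min t (j + 1) : ℕ) : R)
  have hle {t : ℕ} (ht : t ≤ j + 1) : f t = t := by simp [f, ht]
  have hge {t : ℕ} (ht : j + 1 ≤ t) : f t = j + 1 := by simp [f, ht]
  have h : (groundedPathLaplacian R n * groundedPathGreen R n) i j =
      (groundedPathLaplacian R n *ᵥ fun k => f (k + 1)) i := rfl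
  have hi := i.is_le
  have hj := j.is_le
  rw [h, groundedPathLaplacian_eq_diagonal_sub, sub_mulVec, Pi.sub_apply, mulVec_diagonal,
    adjMatrix_pathGraph_mulVec, one_apply, hle (Nat.zero_le _), hge (by omega : j + 1 ≤ n + 2)]
  simp only [Pi.sub_apply, Pi.ofNat_apply, Pi.single_apply, Fin.ext_iff, Fin.val_last]
  rcases lt_trichotomy (i : ℕ) j with hij | hij | hij
  · rw [hle (by omega : (i : ℕ) ≤ j + 1), hle (by omega : (i : ℕ) + 1 ≤ j + 1),
      hle (by omega : (i : ℕ) + 2 ≤ j + 1)]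
    grind
  · rw [hle (by omega : (i : ℕ) ≤ j + 1), hle (by omega : (i : ℕ) + 1 ≤ j + 1),
      hge (by omega : (j : ℕ) + 1 ≤ i + 2)]
    grind
  · rw [hge (by omega : j + 1 ≤ (i : ℕ)), hge (by omega : (j : ℕ) + 1 ≤ i + 1),
      hge (by omega : (j : ℕ) + 1 ≤ i + 2)]
    grind

theorem det_groundedPathLaplacian_ne_zero [Nontrivial R] :
    (groundedPathLaplacian R n).det ≠ 0 :=
  (isUnit_det_of_right_inverse groundedPathLaplacian_mul_groundedPathGreen).ne_zero

theorem det_groundedPathLaplacian_add_single (c : R) :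
    (groundedPathLaplacian R n + single (Fin.last n) (Fin.last n) c).det =
      (groundedPathLaplacian R n).det * (1 + c * (n + 1)) := by
  rw [det_add_single_of_mul_eq_one groundedPathLaplacian_mul_groundedPathGreen]
  simp [groundedPathGreen]

end GroundedPath

section Laplacian

theorem matrix_ext_of_sum_col_eq {m n M : Type*} [Fintype m] [AddCommMonoid M]
    [IsRightCancelAdd M] {A B : Matrix m n M} (r : n → m)
    (hsum : ∀ j, ∑ i, A i j = ∑ i, B i j) (h : ∀ i j, i ≠ r j → A i j = B i j) : A = B := by
  ext i j
  obtain rfl | hi := eq_or_ne i (r j)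
  · have := hsum j
    rwa [Fintype.sum_eq_add_sum_compl (r j), Fintype.sum_eq_add_sum_compl (r j),
      Finset.sum_congr rfl fun i hi => h i j (by simpa using hi), add_left_inj] at this
  · exact h i j hi

variable {R V W : Type*} [CommRing R] [Fintype V] [DecidableEq V]

theorem sum_lapMatrix_apply (G : SimpleGraph V) [DecidableRel G.Adj] (w : V) :
    ∑ v, G.lapMatrix R v w = 0 := by
  simpa [mulVec, dotProduct, (G.isSymm_lapMatrix R).apply w] using
    congrFun (G.lapMatrix_mulVec_const_eq_zero (R := R)) w

theorem lapMatrix_sup_edge (G : SimpleGraph V) [DecidableRel G.Adj] {s t : V}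
    [DecidableRel (G ⊔ edge s t).Adj] (hne : s ≠ t) (hst : ¬G.Adj s t) :
    (G ⊔ edge s t).lapMatrix R = G.lapMatrix R +
      vecMulVec (Pi.single s 1 - Pi.single t 1) (Pi.single s 1 - Pi.single t 1) := by
  refine matrix_ext_of_sum_col_eq id (fun w => ?_) fun v w (hvw : v ≠ w) => ?_
  · simp [sum_lapMatrix_apply, Finset.sum_add_distrib, vecMulVec_apply, ← Finset.sum_mul]
  · have hts : ¬G.Adj t s := fun h => hst h.symm
    simp only [lapMatrix, degMatrix, Matrix.sub_apply, Matrix.add_apply, diagonal_apply_ne _ hvw,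
      adjMatrix_apply, sup_adj, edge_adj, vecMulVec_apply, Pi.sub_apply, Pi.single_apply]
    grind

theorem reindex_lapMatrix {G : SimpleGraph V} [DecidableRel G.Adj] [Fintype W] [DecidableEq W]
    {H : SimpleGraph W} [DecidableRel H.Adj] (f : G ≃g H) :
    reindex f.toEquiv f.toEquiv (G.lapMatrix R) = H.lapMatrix R := by
  have hdeg : reindex f.toEquiv f.toEquiv (G.degMatrix R) = H.degMatrix R := by
    rw [degMatrix, reindex_apply, submatrix_diagonal_equiv, degMatrix]
    congr 1
    ext w
    exact congrArg _ (f.symm.degree_eq w)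
  rw [lapMatrix, lapMatrix, ← hdeg, ← f.reindex_adjMatrix (α := R)]
  rfl

theorem charpoly_lapMatrix_congr {G : SimpleGraph V} [DecidableRel G.Adj] [Fintype W]
    [DecidableEq W] {H : SimpleGraph W} [DecidableRel H.Adj] (f : G ≃g H) :
    (G.lapMatrix R).charpoly = (H.lapMatrix R).charpoly := by
  rw [← reindex_lapMatrix f, charpoly_reindex]

end Laplacian

section PendantPaths

variable {R V : Type*} [CommRing R] {G : SimpleGraph V} {c : V} {n : ℕ} {a b : Fin (n + 1) → V}

/-- The vertices `a 0, …, a n` form a pendant path of `G` hanging from `c`: consecutive ones are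
adjacent, `a 0` is adjacent to `c`, and no further edge meets the path. -/
structure IsPendantPath (G : SimpleGraph V) (c : V) (a : Fin (n + 1) → V) : Prop where
  injective : Function.Injective a
  apply_ne (i : Fin (n + 1)) : a i ≠ c
  adj_iff (i : Fin (n + 1)) (v : V) :
    G.Adj (a i) v ↔ (∃ j, (pathGraph (n + 1)).Adj i j ∧ a j = v) ∨ i = 0 ∧ v = c

theorem sum_groundedPathLaplacian_apply (i : Fin (n + 1)) :
    ∑ j, groundedPathLaplacian R n j i = if i = 0 then 1 else 0 := by
  simp [groundedPathLaplacian, Finset.sum_add_distrib, sum_lapMatrix_apply, single_apply,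
    ite_and, eq_comm]

theorem IsPendantPath.lapMatrix_mul_submatrix [Fintype V] [DecidableEq V] [DecidableRel G.Adj]
    (ha : IsPendantPath G c a) :
    G.lapMatrix R * (1 : Matrix V V R).submatrix id a =
      (1 : Matrix V V R).submatrix id a * groundedPathLaplacian R n - single c 0 1 := by
  have hleft (v : V) (i : Fin (n + 1)) :
      (G.lapMatrix R * (1 : Matrix V V R).submatrix id a) v i = G.lapMatrix R v (a i) := by
    simp [mul_apply, one_apply]
  refine matrix_ext_of_sum_col_eq a (fun i => ?_) fun v i hv => ?_
  · simp only [hleft, sum_lapMatrix_apply, Matrix.sub_apply, Finset.sum_sub_distrib, mul_apply]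
    rw [Finset.sum_comm]
    simp [one_apply, sum_groundedPathLaplacian_apply, single_apply, ite_and, eq_comm]
  · rw [hleft, lapMatrix, Matrix.sub_apply, degMatrix, diagonal_apply_ne _ hv, adjMatrix_apply]
    simp only [G.adj_comm v, ha.adj_iff]
    by_cases hrange : ∃ j, a j = v
    · obtain ⟨j, rfl⟩ := hrange
      have hji : j ≠ i := fun h => hv (congrArg a h)
      have hcorner : ¬(0 = j ∧ 0 = i) := fun h => hji (h.1.symm.trans h.2)
      simp [mul_apply, one_apply, ha.injective.eq_iff, ha.apply_ne, (ha.apply_ne _).symm,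
        groundedPathLaplacian, lapMatrix, degMatrix, hji, hcorner, SimpleGraph.adj_comm _ i j,
        single_apply]
    · push Not at hrange
      simp [mul_apply, one_apply, hrange, (hrange _).symm, single_apply, eq_comm, and_comm]

/-- Two disjoint pendant paths of the same length hanging from the same vertex. -/
structure IsTwinPendantPaths (G : SimpleGraph V) (c : V) (a b : Fin (n + 1) → V) : Prop where
  left : IsPendantPath G c a
  right : IsPendantPath G c b
  apply_ne_apply (i j : Fin (n + 1)) : a i ≠ b j

/-- The graph obtained by joining the tips of two pendant paths; for twin pendant paths on `n + 1`
vertices this creates a cycle of length `2 * n + 3`. -/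
def closeTips (G : SimpleGraph V) (a b : Fin (n + 1) → V) : SimpleGraph V :=
  G ⊔ edge (a (Fin.last n)) (b (Fin.last n))

/-- The columns `e_{a i} - e_{b i}` span the vectors that are supported on a pair of twin paths and
antisymmetric under swapping them. -/
def antisymmetrizer (R : Type*) [CommRing R] [DecidableEq V] (a b : Fin (n + 1) → V) :
    Matrix V (Fin (n + 1)) R :=
  (1 : Matrix V V R).submatrix id a - (1 : Matrix V V R).submatrix id b

namespace IsTwinPendantPaths

theorem not_adj_apply (h : IsTwinPendantPaths G c a b) (i j : Fin (n + 1)) :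
    ¬G.Adj (a i) (b j) := by
  simp [h.left.adj_iff, h.apply_ne_apply, h.right.apply_ne]

variable [Fintype V]

theorem card_edgeFinset_closeTips [Fintype (closeTips G a b).edgeSet]
    (h : IsTwinPendantPaths G c a b) (hG : G.IsTree) :
    (closeTips G a b).edgeFinset.card = Fintype.card V := by
  convert (G.card_edgeFinset_sup_edge (h.not_adj_apply (Fin.last n) (Fin.last n))
    (h.apply_ne_apply _ _)).trans hG.card_edgeFinset
  rfl

variable [DecidableEq V]

theorem lapMatrix_mul_antisymmetrizer [DecidableRel G.Adj] (h : IsTwinPendantPaths G c a b) :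
    G.lapMatrix R * antisymmetrizer R a b =
      antisymmetrizer R a b * groundedPathLaplacian R n := by
  rw [antisymmetrizer, Matrix.mul_sub, h.left.lapMatrix_mul_submatrix,
    h.right.lapMatrix_mul_submatrix, Matrix.sub_mul]
  abel

theorem transpose_antisymmetrizer_mul_self (h : IsTwinPendantPaths G c a b) :
    (antisymmetrizer R a b)ᵀ * antisymmetrizer R a b = (2 : R) • 1 := by
  have hmul (p q : Fin (n + 1) → V) : ((1 : Matrix V V R).submatrix id p)ᵀ *
      (1 : Matrix V V R).submatrix id q = (1 : Matrix V V R).submatrix p q := by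
    rw [transpose_submatrix, transpose_one, ← submatrix_mul _ _ _ _ _ Function.bijective_id,
      Matrix.mul_one]
  have hab : (1 : Matrix V V R).submatrix a b = 0 := by
    ext i j
    simp [h.apply_ne_apply]
  have hba : (1 : Matrix V V R).submatrix b a = 0 := by
    ext i j
    simp [(h.apply_ne_apply _ _).symm]
  rw [antisymmetrizer, transpose_sub, Matrix.sub_mul, Matrix.mul_sub, Matrix.mul_sub, hmul, hmul,
    hmul, hmul, submatrix_one _ h.left.injective, submatrix_one _ h.right.injective, hab, hba,
    sub_zero, zero_sub, sub_neg_eq_add, two_smul]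

theorem lapMatrix_closeTips [DecidableRel G.Adj] [DecidableRel (closeTips G a b).Adj]
    (h : IsTwinPendantPaths G c a b) :
    (closeTips G a b).lapMatrix R = G.lapMatrix R + antisymmetrizer R a b *
      (single (Fin.last n) (Fin.last n) (1 : R) * (antisymmetrizer R a b)ᵀ) := by
  have hcol : (antisymmetrizer R a b).col (Fin.last n) =
      Pi.single (a (Fin.last n)) 1 - Pi.single (b (Fin.last n)) 1 := by
    ext v
    simp [antisymmetrizer, one_apply, Pi.single_apply]
  unfold closeTips at *
  rw [lapMatrix_sup_edge G (h.apply_ne_apply _ _) (h.not_adj_apply _ _),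
    single_eq_single_vecMulVec_single, vecMulVec_mul, mul_vecMulVec, vecMul_transpose,
    mulVec_single_one, hcol]

theorem charpoly_lapMatrix_closeTips_mul [DecidableRel G.Adj] [DecidableRel (closeTips G a b).Adj]
    (h : IsTwinPendantPaths G c a b) :
    ((closeTips G a b).lapMatrix R).charpoly * (groundedPathLaplacian R n).charpoly =
      (G.lapMatrix R).charpoly *
        (groundedPathLaplacian R n + single (Fin.last n) (Fin.last n) 2).charpoly := by
  rw [h.lapMatrix_closeTips, charpoly_add_mul_mul_charpoly h.lapMatrix_mul_antisymmetrizer,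
    Matrix.mul_assoc, h.transpose_antisymmetrizer_mul_self, Matrix.mul_smul, Matrix.mul_one,
    smul_single, smul_eq_mul, mul_one]

theorem sum_map_roots_charpoly_lapMatrix_closeTips [IsDomain R] [DecidableRel G.Adj]
    [DecidableRel (closeTips G a b).Adj] (h : IsTwinPendantPaths G c a b) {M : Type*}
    [AddCommMonoid M] [IsRightCancelAdd M] {φ : R → M} (hφ : ∀ x, φ (4 - x) = φ x) :
    (((closeTips G a b).lapMatrix R).charpoly.roots.map φ).sum =
      ((G.lapMatrix R).charpoly.roots.map φ).sum := by
  have hroots := congrArg roots (h.charpoly_lapMatrix_closeTips_mul (R := R))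
  rw [charpoly_groundedPathLaplacian_add_single,
    roots_mul ((charpoly_monic _).mul (charpoly_monic _)).ne_zero,
    roots_mul ((charpoly_monic _).mul (charpoly_monic _)).ne_zero,
    roots_charpoly_scalar_sub] at hroots
  have hsum := congrArg (fun s => (s.map φ).sum) hroots
  simp only [Multiset.map_add, Multiset.sum_add, Multiset.map_map, Function.comp_def, hφ] at hsum
  exact add_right_cancel hsum

theorem length_eq_of_charpoly_lapMatrix_closeTips_eq [IsDomain R] [CharZero R] {m : ℕ}
    {a' b' : Fin (m + 1) → V} {c' : V} [DecidableRel (closeTips G a b).Adj]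
    [DecidableRel (closeTips G a' b').Adj]
    (h : IsTwinPendantPaths G c a b) (h' : IsTwinPendantPaths G c' a' b')
    (heq : ((closeTips G a b).lapMatrix R).charpoly = ((closeTips G a' b').lapMatrix R).charpoly) :
    n = m := by
  have hcross : (groundedPathLaplacian R n + single (Fin.last n) (Fin.last n) 2).charpoly *
        (groundedPathLaplacian R m).charpoly =
      (groundedPathLaplacian R m + single (Fin.last m) (Fin.last m) 2).charpoly *
        (groundedPathLaplacian R n).charpoly := by
    refine mul_left_cancel₀ (G.lapMatrix R).charpoly_monic.ne_zero ?_
    rw [← mul_assoc, ← h.charpoly_lapMatrix_closeTips_mul, ← mul_assoc,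
      ← h'.charpoly_lapMatrix_closeTips_mul, heq]
    ring
  have hzero := congrArg (eval 0) hcross
  simp only [eval_mul, eval_charpoly, map_zero, zero_sub, det_neg,
    det_groundedPathLaplacian_add_single] at hzero
  have hdet (k : ℕ) : (-1) ^ Fintype.card (Fin (k + 1)) * (groundedPathLaplacian R k).det ≠ 0 :=
    mul_ne_zero (by simp) det_groundedPathLaplacian_ne_zero
  have hratio : (1 + 2 * (n + 1) : R) = 1 + 2 * (m + 1) :=
    mul_left_cancel₀ (mul_ne_zero (hdet n) (hdet m)) (by linear_combination hzero)
  norm_cast at hratio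
  omega

end IsTwinPendantPaths

end PendantPaths

section ParentGraph

variable {V : Type*} {p : V → V} {root : V}

/-- The graph joining every vertex to its parent. -/
def parentGraph (p : V → V) : SimpleGraph V :=
  fromRel fun v w => p v = w

theorem connected_parentGraph (rank : V → ℕ) (hrank : ∀ v, v ≠ root → rank (p v) < rank v) :
    (parentGraph p).Connected := by
  refine (connected_iff_exists_forall_reachable _).mpr ⟨root, fun v => Reachable.symm ?_⟩
  induction hn : rank v using Nat.strong_induction_on generalizing v with
  | _ n ih =>
    obtain rfl | hv := eq_or_ne v root
    · exact Reachable.rfl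
    · have hlt := hrank v hv
      have hadj : (parentGraph p).Adj v (p v) :=
        (fromRel_adj ..).mpr ⟨fun h => hlt.ne' (congrArg rank h), Or.inl rfl⟩
      exact hadj.reachable.trans (ih _ (hn ▸ hlt) _ rfl)

theorem edgeSet_parentGraph_subset (hroot : p root = root) :
    (parentGraph p).edgeSet ⊆ (fun v => s(v, p v)) '' {root}ᶜ := by
  rintro ⟨v, w⟩ ⟨hvw : v ≠ w, rfl | rfl : p v = w ∨ p w = v⟩
  · exact ⟨v, fun hv : v = root => hvw (by rw [hv, hroot]), rfl⟩
  · exact ⟨w, fun hw : w = root => hvw (by rw [hw, hroot]), Sym2.eq_swap⟩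

theorem isTree_parentGraph [Finite V] (hroot : p root = root) (rank : V → ℕ)
    (hrank : ∀ v, v ≠ root → rank (p v) < rank v) : (parentGraph p).IsTree := by
  have hconn := connected_parentGraph rank hrank
  have hcard : Nat.card (parentGraph p).edgeSet + 1 ≤ Nat.card V := by
    have hle := (Set.ncard_le_ncard (edgeSet_parentGraph_subset hroot)).trans
      (Set.ncard_image_le (Set.toFinite _))
    have := Set.ncard_add_ncard_compl {root}
    rw [Set.ncard_singleton] at this
    rw [Nat.card_coe_set_eq]
    omega
  exact isTree_iff_connected_and_card.mpr
    ⟨hconn, hcard.antisymm hconn.card_vert_le_card_edgeSet_add_one⟩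

end ParentGraph

section Spider

variable {ι : Type*} {d : ι → ℕ}

/-- The vertices of a spider: the body `none`, and `d i + 1` vertices on every leg `i`. -/
abbrev SpiderVertex (d : ι → ℕ) : Type _ :=
  Option (Σ i, Fin (d i + 1))

namespace SpiderVertex

/-- The vertices of a leg, counted from the body. -/
def leg (i : ι) (m : Fin (d i + 1)) : SpiderVertex d :=
  some ⟨i, m⟩

/-- The neighbour in the direction of the body. -/
def parent : SpiderVertex d → SpiderVertex d
  | some ⟨i, ⟨m + 1, h⟩⟩ => leg i ⟨m, Nat.lt_of_succ_lt h⟩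
  | _ => none

/-- The distance to the body. -/
def height : SpiderVertex d → ℕ
  | some ⟨_, m⟩ => m + 1
  | none => 0

theorem height_parent_lt (v : SpiderVertex d) (hv : v ≠ none) : height (parent v) < height v := by
  rcases v with _ | ⟨i, _ | m, h⟩
  · exact absurd rfl hv
  · exact Nat.zero_lt_one
  · exact Nat.lt_succ_self _

theorem leg_injective (i : ι) : Function.Injective (leg (d := d) i) := by
  intro m m' h
  simpa [leg] using h

theorem leg_ne_leg {i j : ι} (h : i ≠ j) (m : Fin (d i + 1)) (m' : Fin (d j + 1)) :
    leg i m ≠ leg j m' := by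
  simp [leg, h]

theorem parent_leg_eq_iff (i : ι) (m : Fin (d i + 1)) (v : SpiderVertex d) :
    parent (leg i m) = v ↔ (∃ j : Fin (d i + 1), (j : ℕ) + 1 = m ∧ leg i j = v) ∨
      m = 0 ∧ v = none := by
  obtain ⟨_ | m, h⟩ := m
  · have : parent (leg i ⟨0, h⟩) = none := rfl
    rw [this]
    simp [eq_comm]
  · have : parent (leg i ⟨m + 1, h⟩) = leg i ⟨m, Nat.lt_of_succ_lt h⟩ := rfl
    rw [this]
    constructor
    · rintro rfl
      exact Or.inl ⟨_, rfl, rfl⟩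
    · rintro (⟨j, hj, rfl⟩ | ⟨h0, -⟩)
      · exact congrArg (leg i) (Fin.ext (Nat.succ_injective hj).symm)
      · exact absurd (congrArg Fin.val h0) (Nat.succ_ne_zero m)

theorem parent_eq_leg_iff (i : ι) (m : Fin (d i + 1)) (v : SpiderVertex d) :
    parent v = leg i m ↔ ∃ j : Fin (d i + 1), (m : ℕ) + 1 = j ∧ leg i j = v := by
  constructor
  · rcases v with _ | ⟨i', _ | m', h'⟩ <;> intro h
    · cases h
    · cases h
    · cases h
      exact ⟨_, rfl, rfl⟩
  · rintro ⟨⟨j, hj⟩, rfl, rfl⟩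
    rfl

end SpiderVertex

open SpiderVertex

/-- The spider whose leg `i` has `d i + 1` vertices. -/
def spider (d : ι → ℕ) : SimpleGraph (SpiderVertex d) :=
  parentGraph parent

theorem isTree_spider [Finite ι] : (spider d).IsTree :=
  isTree_parentGraph rfl height height_parent_lt

theorem isPendantPath_leg (i : ι) : IsPendantPath (spider d) none (leg i) where
  injective := leg_injective i
  apply_ne _ := Option.some_ne_none _
  adj_iff m v := by
    have hself : parent (leg i m) ≠ leg i m := fun h =>
      (height_parent_lt _ (Option.some_ne_none _)).ne (congrArg height h)
    have hadj : (spider d).Adj (leg i m) v ↔ parent (leg i m) = v ∨ parent v = leg i m :=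
      (fromRel_adj ..).trans <| and_iff_right_of_imp <| by
        rintro (h | h) rfl <;> exact hself h
    simp only [hadj, parent_leg_eq_iff, parent_eq_leg_iff, pathGraph_adj, or_and_right,
      exists_or]
    rw [or_right_comm, or_congr_left or_comm]

theorem card_spiderVertex [Fintype ι] :
    Fintype.card (SpiderVertex d) = ∑ i, (d i + 1) + 1 := by
  simp

end Spider

section LaplacianEnergy

variable {V W : Type*} [Fintype V] [DecidableEq V] [Fintype W] [DecidableEq W]
  {G : SimpleGraph V} {H : SimpleGraph W}

theorem LEnergy_congr (f : G ≃g H) : LEnergy G = LEnergy H := by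
  rw [LEnergy, LEnergy, charpoly_lapMatrix_congr f, f.card_edgeFinset_eq,
    Fintype.card_congr f.toEquiv]

theorem LEnergy_eq_sum_abs_sub_two [Nonempty V] (h : G.edgeFinset.card = Fintype.card V) :
    LEnergy G = ((G.lapMatrix ℝ).charpoly.roots.map fun μ => |μ - 2|).sum := by
  have hcard : (Fintype.card V : ℝ) ≠ 0 := Nat.cast_ne_zero.mpr Fintype.card_ne_zero
  rw [LEnergy, h, mul_div_cancel_right₀ _ hcard]

namespace IsTwinPendantPaths

variable {c : V} {n : ℕ} {a b : Fin (n + 1) → V}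

theorem LEnergy_closeTips (h : IsTwinPendantPaths G c a b) (hG : G.IsTree) :
    LEnergy (closeTips G a b) =
      ((G.lapMatrix ℝ).charpoly.roots.map fun μ => |μ - 2|).sum := by
  have := hG.connected.nonempty
  rw [LEnergy_eq_sum_abs_sub_two (h.card_edgeFinset_closeTips hG)]
  refine h.sum_map_roots_charpoly_lapMatrix_closeTips fun x => ?_
  rw [abs_sub_comm x 2]
  exact congrArg _ (by ring)

end IsTwinPendantPaths

end LaplacianEnergy

section TwinSpider

open SpiderVertex

/-- Legs consisting of one twin pair with `j + 1` vertices for every `j < ℓ`, and `f` feet with a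
single vertex. -/
def twinLegs (ℓ f : ℕ) : (Fin ℓ × Bool) ⊕ Fin f → ℕ :=
  Sum.elim (fun i => i.1) 0

variable {ℓ f : ℕ}

theorem card_spiderVertex_twinLegs :
    Fintype.card (SpiderVertex (twinLegs ℓ f)) = ℓ ^ 2 + ℓ + 1 + f := by
  have hgauss : ∑ j : Fin ℓ, 2 * ((j : ℕ) + 1) = ℓ ^ 2 + ℓ := by
    induction ℓ with
    | zero => rfl
    | succ ℓ ih =>
      simp only [Fin.sum_univ_castSucc, Fin.val_castSucc, ih, Fin.val_last]
      ring
  rw [card_spiderVertex, Fintype.sum_sum_type, Fintype.sum_prod_type]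
  simp only [twinLegs, Sum.elim_inl, Sum.elim_inr, Pi.zero_apply, Finset.sum_const,
    Finset.card_univ, Fintype.card_bool, Fintype.card_fin, smul_eq_mul, hgauss]
  ring

theorem isTwinPendantPaths_leg (k : Fin ℓ) :
    IsTwinPendantPaths (n := k) (spider (twinLegs ℓ f)) none
      (leg (d := twinLegs ℓ f) (Sum.inl (k, true)))
      (leg (d := twinLegs ℓ f) (Sum.inl (k, false))) where
  left := isPendantPath_leg _
  right := isPendantPath_leg _
  apply_ne_apply :=
    leg_ne_leg (d := twinLegs ℓ f) (i := Sum.inl (k, true)) (j := Sum.inl (k, false)) (by simp)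

/-- The unicyclic graph in which the tips of the `k`-th twin pair of legs are joined. -/
abbrev closedSpider (f : ℕ) (k : Fin ℓ) : SimpleGraph (SpiderVertex (twinLegs ℓ f)) :=
  closeTips (n := k) (spider (twinLegs ℓ f)) (leg (d := twinLegs ℓ f) (Sum.inl (k, true)))
    (leg (d := twinLegs ℓ f) (Sum.inl (k, false)))

end TwinSpider

theorem equienergetic_unicyclic_family_general (ℓ n : ℕ) (hn : ℓ ^ 2 + ℓ + 1 ≤ n) :
    ∃ G : Fin ℓ → SimpleGraph (Fin n),
      (∀ i, (G i).Connected) ∧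
      (∀ i, (G i).edgeFinset.card = n) ∧
      (∀ i j, i ≠ j →
        ((G i).lapMatrix ℝ).charpoly.roots ≠ ((G j).lapMatrix ℝ).charpoly.roots) ∧
      (∀ i j, LEnergy (G i) = LEnergy (G j)) := by
  obtain ⟨f, rfl⟩ := Nat.exists_eq_add_of_le hn
  have hcard := card_spiderVertex_twinLegs (ℓ := ℓ) (f := f)
  have htree : (spider (twinLegs ℓ f)).IsTree := isTree_spider
  have htwin (k : Fin ℓ) := isTwinPendantPaths_leg (f := f) k
  let e (k : Fin ℓ) : closedSpider f k ≃g _ := (closedSpider f k).overFinIso hcard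
  refine ⟨fun k => (closedSpider f k).overFin hcard, fun k => ?_, fun k => ?_,
    fun i j hij heq => hij ?_, fun i j => ?_⟩
  · exact (e k).connected_iff.mp (htree.connected.mono le_sup_left)
  · rw [← (e k).card_edgeFinset_eq, ← hcard]
    exact (htwin k).card_edgeFinset_closeTips htree
  · have := charpoly_eq_of_roots_eq_of_isHermitian
      (posSemidef_lapMatrix ℝ _).isHermitian (posSemidef_lapMatrix ℝ _).isHermitian heq
    rw [← charpoly_lapMatrix_congr (e i), ← charpoly_lapMatrix_congr (e j)] at this
    exact Fin.ext ((htwin i).length_eq_of_charpoly_lapMatrix_closeTips_eq (htwin j) this)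
  · rw [← LEnergy_congr (e i), ← LEnergy_congr (e j)]
    exact ((htwin i).LEnergy_closeTips htree).trans ((htwin j).LEnergy_closeTips htree).symm

/-- For every integer `ℓ ≥ 2`, there exist `ℓ` pairwise Laplacian-noncospectral connected
unicyclic graphs on `n = 2ℓ² + 2ℓ + 2` vertices (a connected graph is unicyclic iff it has
as many edges as vertices), all having the same Laplacian energy. -/
theorem equienergetic_unicyclic_family (ℓ : ℕ) (hℓ : 2 ≤ ℓ) :
    ∃ G : Fin ℓ → SimpleGraph (Fin (2 * ℓ ^ 2 + 2 * ℓ + 2)),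
      (∀ i, (G i).Connected) ∧
      (∀ i, (G i).edgeFinset.card = 2 * ℓ ^ 2 + 2 * ℓ + 2) ∧
      (∀ i j, i ≠ j →
        ((G i).lapMatrix ℝ).charpoly.roots ≠ ((G j).lapMatrix ℝ).charpoly.roots) ∧
      (∀ i j, LEnergy (G i) = LEnergy (G j)) :=
  equienergetic_unicyclic_family_general ℓ _ (by lia)
end
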